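/- arXiv:1610.04214 — 3 statements merged into one kernel-verified Lean document; each statement's English description precedes it below -/
import Mathlib

section
/- Let d ≥ 2 and d_B ≥ 1 be integers and let M be a complex matrix on ℂ^d ⊗ ℂ^d ⊗ ℂ^{d_B}. Then ∫ (U⊗U⊗I_{d_B}) M (U⊗U⊗I_{d_B})† dU = I_{d²} ⊗ R^𝟙 + F ⊗ R^F, where the integral is with respect to the Haar probability measure on the unitary group U(d), F is the swap operator on ℂ^d ⊗ ℂ^d, and R^𝟙 = (1/(d(d²−1)))·(d·Tr₁₂[M] − Tr₁₂[(F⊗I_{d_B})M]) and R^F = (1/(d(d²−1)))·(d·Tr₁₂[(F⊗I_{d_B})M] − Tr₁₂[M]), with Tr₁₂ denoting the partial trace over the first two tensor factors. -/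
/-!
Fix indices `b, c` of the third factor. The corresponding block of `(W ⊗ 1) M (W ⊗ 1)†` is
`W X W†`, with `X` the `(b, c)` block of `M`, so it suffices to compute the twirl
`A = ∫ (U ⊗ U) X (U ⊗ U)† dU` of a matrix `X` on `ℂ^d ⊗ ℂ^d` (`twirl_eq`).

Left invariance of the measure makes `A` commute with `V ⊗ V` for every unitary `V`
(`twirl_comm`). Three explicit families of unitaries then force `A = a • 1 + b • F`
(`comm_form`): diagonal phases kill every entry of `A` outside the support of `1` and `F`
(`comm_zero`); permutation matrices make the surviving entries depend only on their type, so
that `A_{ij,ij} = a`, `A_{ij,ji} = b` for `i ≠ j` and `A_{ii,ii} = c` (`comm_perm`); a single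
unitary with no zero entry gives `c = a + b` (`comm_diag`).

Since `1` and `F` commute with `U ⊗ U`, the twirl preserves `Tr X` and `Tr (F X)`
(`trace_twirl`). This gives `d² a + d b = Tr X` and `d a + d² b = Tr (F X)`, which determine
`a` and `b` because `d (d² - 1) ≠ 0`.
-/


open scoped Kronecker ComplexOrder Matrix
open MeasureTheory

/-- The swap operator `F` on `ℂ^d ⊗ ℂ^d`, determined by `F(|i⟩⊗|j⟩) = |j⟩⊗|i⟩`. -/
def swapOp (d : ℕ) : Matrix (Fin d × Fin d) (Fin d × Fin d) ℂ :=
  Matrix.of fun p q => if p.1 = q.2 ∧ p.2 = q.1 then 1 else 0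

/-- Partial trace over the first tensor factor. -/
noncomputable def ptraceFst {α β : Type*} [Fintype α] (M : Matrix (α × β) (α × β) ℂ) :
    Matrix β β ℂ :=
  Matrix.of fun j j' => ∑ i, M (i, j) (i, j')

noncomputable instance {n : Type*} [Fintype n] [DecidableEq n] :
    MeasurableSpace (Matrix.unitaryGroup n ℂ) := borel _

/-! ### The twirl on two factors -/

/-- The conjugation `X ↦ (U ⊗ U) X (U ⊗ U)†` on `ℂ^d ⊗ ℂ^d`. -/
noncomputable def conjTwo {d : ℕ} (X : Matrix (Fin d × Fin d) (Fin d × Fin d) ℂ)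
    (U : Matrix (Fin d) (Fin d) ℂ) : Matrix (Fin d × Fin d) (Fin d × Fin d) ℂ :=
  (U ⊗ₖ U) * X * (U ⊗ₖ U)ᴴ

/-- The entrywise average of `conjTwo X` with respect to `μ`. -/
noncomputable def twirl {d : ℕ} (μ : Measure (Matrix.unitaryGroup (Fin d) ℂ))
    (X : Matrix (Fin d × Fin d) (Fin d × Fin d) ℂ) :
    Matrix (Fin d × Fin d) (Fin d × Fin d) ℂ :=
  Matrix.of fun p q => ∫ U, conjTwo X (U : Matrix (Fin d) (Fin d) ℂ) p q ∂μ

instance unitaryGroup_borelSpace {n : Type*} [Fintype n] [DecidableEq n] :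
    BorelSpace (Matrix.unitaryGroup n ℂ) := ⟨rfl⟩

lemma kron_self_mem {d : ℕ} {U : Matrix (Fin d) (Fin d) ℂ}
    (hU : U ∈ Matrix.unitaryGroup (Fin d) ℂ) :
    U ⊗ₖ U ∈ Matrix.unitaryGroup (Fin d × Fin d) ℂ :=
  Matrix.kronecker_mem_unitary hU hU

lemma continuous_conjTwo {d : ℕ} (X : Matrix (Fin d × Fin d) (Fin d × Fin d) ℂ)
    (p q : Fin d × Fin d) :
    Continuous fun U : Matrix.unitaryGroup (Fin d) ℂ =>
      conjTwo X (U : Matrix (Fin d) (Fin d) ℂ) p q := by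
  have h : Continuous fun U : Matrix.unitaryGroup (Fin d) ℂ =>
      ((U : Matrix (Fin d) (Fin d) ℂ) ⊗ₖ (U : Matrix (Fin d) (Fin d) ℂ)) := by
    refine continuous_matrix fun i j => ?_
    simp only [Matrix.kroneckerMap_apply]
    exact (continuous_subtype_val.matrix_elem _ _).mul (continuous_subtype_val.matrix_elem _ _)
  exact ((h.matrix_mul continuous_const).matrix_mul h.matrix_conjTranspose).matrix_elem p q

lemma integrable_conjTwo {d : ℕ} (μ : Measure (Matrix.unitaryGroup (Fin d) ℂ))
    [IsProbabilityMeasure μ] (X : Matrix (Fin d × Fin d) (Fin d × Fin d) ℂ)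
    (p q : Fin d × Fin d) :
    Integrable (fun U : Matrix.unitaryGroup (Fin d) ℂ =>
      conjTwo X (U : Matrix (Fin d) (Fin d) ℂ) p q) μ := by
  refine Integrable.of_bound (continuous_conjTwo X p q).aestronglyMeasurable
    (∑ s, ∑ r, ‖X r s‖) (Filter.Eventually.of_forall fun U => ?_)
  have hb := entry_norm_bound_of_unitary (kron_self_mem U.2)
  rw [conjTwo, Matrix.mul_apply]
  refine (norm_sum_le _ _).trans (Finset.sum_le_sum fun s _ => ?_)
  rw [norm_mul, Matrix.conjTranspose_apply, norm_star]
  refine (mul_le_of_le_one_right (norm_nonneg _) (hb q s)).trans ?_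
  rw [Matrix.mul_apply]
  refine (norm_sum_le _ _).trans (Finset.sum_le_sum fun r _ => ?_)
  rw [norm_mul]
  exact mul_le_of_le_one_left (norm_nonneg _) (hb p r)

/-- Linear functionals pass through the average. -/
lemma map_twirl {d : ℕ} (μ : Measure (Matrix.unitaryGroup (Fin d) ℂ))
    [IsProbabilityMeasure μ] (X : Matrix (Fin d × Fin d) (Fin d × Fin d) ℂ)
    (L : Matrix (Fin d × Fin d) (Fin d × Fin d) ℂ →ₗ[ℂ] ℂ) :
    L (twirl μ X) = ∫ U : Matrix.unitaryGroup (Fin d) ℂ,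
      L (conjTwo X (U : Matrix (Fin d) (Fin d) ℂ)) ∂μ := by
  have hL : ∀ Y, L Y = ∑ p, ∑ q, Y p q * L (Matrix.single p q 1) := by
    intro Y
    conv_lhs => rw [Matrix.matrix_eq_sum_single Y]
    simp only [map_sum]
    refine Finset.sum_congr rfl fun p _ => Finset.sum_congr rfl fun q _ => ?_
    rw [← smul_eq_mul, ← map_smul, Matrix.smul_single, smul_eq_mul, mul_one]
  rw [hL]
  simp_rw [hL (conjTwo X _)]
  rw [integral_finsetSum]
  · refine Finset.sum_congr rfl fun p _ => ?_
    rw [integral_finsetSum]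
    · refine Finset.sum_congr rfl fun q _ => ?_
      rw [integral_mul_const]
      rfl
    · exact fun q _ => (integrable_conjTwo μ X p q).mul_const _
  · exact fun p _ => integrable_finsetSum _ fun q _ => (integrable_conjTwo μ X p q).mul_const _

/-- Left invariance of `μ` puts the twirl in the commutant of all `V ⊗ V`. -/
lemma twirl_comm {d : ℕ} (μ : Measure (Matrix.unitaryGroup (Fin d) ℂ))
    [IsProbabilityMeasure μ]
    (hinv : ∀ V : Matrix.unitaryGroup (Fin d) ℂ, μ.map (fun U => V * U) = μ)
    (X : Matrix (Fin d × Fin d) (Fin d × Fin d) ℂ) {V : Matrix (Fin d) (Fin d) ℂ}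
    (hV : V ∈ Matrix.unitaryGroup (Fin d) ℂ) :
    twirl μ X * (V ⊗ₖ V) = (V ⊗ₖ V) * twirl μ X := by
  have h : twirl μ X = (V ⊗ₖ V) * twirl μ X * (V ⊗ₖ V)ᴴ := by
    ext p q
    have h1 := map_twirl μ X ((Matrix.entryLinearMap ℂ ℂ p q).comp
      ((LinearMap.mulRight ℂ (V ⊗ₖ V)ᴴ).comp (LinearMap.mulLeft ℂ (V ⊗ₖ V))))
    simp only [LinearMap.comp_apply, LinearMap.mulRight_apply, LinearMap.mulLeft_apply,
      Matrix.entryLinearMap_apply] at h1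
    rw [h1]
    have hm : Continuous fun U : Matrix.unitaryGroup (Fin d) ℂ =>
        (⟨V, hV⟩ : Matrix.unitaryGroup (Fin d) ℂ) * U := continuous_const.mul continuous_id
    change ∫ U, conjTwo X (U : Matrix (Fin d) (Fin d) ℂ) p q ∂μ = _
    conv_lhs => rw [← hinv ⟨V, hV⟩]
    rw [integral_map hm.aemeasurable (continuous_conjTwo X p q).aestronglyMeasurable]
    refine integral_congr_ae (Filter.Eventually.of_forall fun U => ?_)
    simp only [conjTwo, Submonoid.coe_mul, Matrix.mul_kronecker_mul,
      Matrix.conjTranspose_mul, Matrix.mul_assoc]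
  have hW : (V ⊗ₖ V)ᴴ * (V ⊗ₖ V) = 1 := (Unitary.mem_iff.1 (kron_self_mem hV)).1
  conv_lhs => rw [h]
  rw [Matrix.mul_assoc, hW, Matrix.mul_one]

/-! ### The commutant of the unitaries `V ⊗ V` -/

lemma diag_mem {d : ℕ} (x : Fin d) :
    Matrix.diagonal (fun i : Fin d => if i = x then Complex.I else 1) ∈
      Matrix.unitaryGroup (Fin d) ℂ := by
  rw [Matrix.mem_unitaryGroup_iff, Matrix.star_eq_conjTranspose, Matrix.diagonal_conjTranspose,
    Matrix.diagonal_mul_diagonal, ← Matrix.diagonal_one]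
  congr 1
  ext i
  by_cases h : i = x <;> simp [h]

lemma perm_mem {d : ℕ} (σ : Equiv.Perm (Fin d)) :
    (Matrix.of fun i j : Fin d => if i = σ j then (1 : ℂ) else 0) ∈
      Matrix.unitaryGroup (Fin d) ℂ := by
  rw [Matrix.mem_unitaryGroup_iff', Matrix.star_eq_conjTranspose]
  ext i j
  simp [Matrix.mul_apply, Matrix.one_apply, apply_ite, eq_comm]

/-- `1 + z J`, with `J` the all-ones matrix and `z = (i - 1)/d`, multiplies the uniform vector by
`i` and fixes its orthogonal complement. All its entries are nonzero. -/
lemma phase_mem {d : ℕ} (hd : d ≠ 0) :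
    (Matrix.of fun i j : Fin d => (if i = j then (1 : ℂ) else 0) + (Complex.I - 1) / d) ∈
      Matrix.unitaryGroup (Fin d) ℂ := by
  have hd' : (d : ℂ) ≠ 0 := by exact_mod_cast hd
  rw [Matrix.mem_unitaryGroup_iff, Matrix.star_eq_conjTranspose]
  ext i j
  simp only [Matrix.mul_apply, Matrix.one_apply, Matrix.of_apply, Matrix.conjTranspose_apply,
    star_add, apply_ite star, star_one, star_zero, star_div₀, add_mul, mul_add,
    Finset.sum_add_distrib, ite_mul, mul_ite, one_mul, zero_mul, mul_one, mul_zero,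
    Finset.sum_ite_eq, Finset.mem_univ, if_true, Finset.sum_const,
    Finset.card_univ, Fintype.card_fin, nsmul_eq_mul, star_sub, star_natCast,
    Complex.star_def, Complex.conj_I]
  have hI := Complex.I_mul_I
  field_simp
  linear_combination (-1 : ℂ) * hI

/-- Off-support entries of the commutant vanish: commuting with the phase `i` at the basis vector
`x` forces the number of occurrences of `x` in `p` and in `q` to agree modulo `4`, and these
numbers are at most `2`. -/
lemma comm_zero {d : ℕ} {A : Matrix (Fin d × Fin d) (Fin d × Fin d) ℂ}
    (hA : ∀ V ∈ Matrix.unitaryGroup (Fin d) ℂ, A * (V ⊗ₖ V) = (V ⊗ₖ V) * A)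
    (p q : Fin d × Fin d) (h1 : p ≠ q) (h2 : p ≠ q.swap) : A p q = 0 := by
  by_contra h0
  have key : ∀ x : Fin d,
      ((if q.1 = x then Complex.I else 1) * (if q.2 = x then Complex.I else 1)) =
      ((if p.1 = x then Complex.I else 1) * (if p.2 = x then Complex.I else 1)) := by
    intro x
    have h := congrFun (congrFun (hA _ (diag_mem x)) p) q
    rw [Matrix.diagonal_kronecker_diagonal, Matrix.mul_diagonal, Matrix.diagonal_mul,
      mul_comm (A p q)] at h
    exact mul_right_cancel₀ h0 h
  obtain ⟨i, j⟩ := p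
  obtain ⟨k, l⟩ := q
  have e1 : Complex.I ≠ 1 := by simp [Complex.ext_iff]
  have e2 : Complex.I * Complex.I ≠ 1 := by norm_num [Complex.I_mul_I]
  have e3 : Complex.I * Complex.I ≠ Complex.I := by simp [Complex.ext_iff]
  -- A product of two such phases records how often `x` occurs: `1`, `i`, `i²` are distinct.
  have count : ∀ a b a' b' : Prop, [Decidable a] → [Decidable b] → [Decidable a'] →
      [Decidable b'] → ((if a then Complex.I else 1) * (if b then Complex.I else 1)) =
        ((if a' then Complex.I else 1) * (if b' then Complex.I else 1)) →
      ((a ∧ b ↔ a' ∧ b') ∧ (a ∨ b ↔ a' ∨ b')) := by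
    intro a b a' b' _ _ _ _ h
    clear key h1 h2 h0 hA
    generalize Complex.I = w at *
    split_ifs at h <;> grind
  have ki := count _ _ _ _ (key i)
  have kj := count _ _ _ _ (key j)
  simp only [Prod.swap_prod_mk, ne_eq, Prod.mk.injEq, not_and] at h1 h2 ki kj
  grind

lemma comm_perm {d : ℕ} {A : Matrix (Fin d × Fin d) (Fin d × Fin d) ℂ}
    (hA : ∀ V ∈ Matrix.unitaryGroup (Fin d) ℂ, A * (V ⊗ₖ V) = (V ⊗ₖ V) * A)
    (σ : Equiv.Perm (Fin d)) (i j k l : Fin d) :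
    A (σ i, σ j) (σ k, σ l) = A (i, j) (k, l) := by
  have h := congrFun (congrFun (hA _ (perm_mem σ)) (σ i, σ j)) (k, l)
  rw [Matrix.mul_apply, Matrix.mul_apply, Finset.sum_eq_single (σ k, σ l),
    Finset.sum_eq_single (i, j)] at h
  · simpa using h
  · rintro ⟨r, s⟩ - hr
    have : ¬ (i = r ∧ j = s) := fun ⟨e, f⟩ => hr (by rw [e, f])
    simp [Matrix.kroneckerMap_apply, ← ite_and]
    tauto
  · simp
  · rintro ⟨r, s⟩ - hr
    have : ¬ (r = σ k ∧ s = σ l) := fun ⟨e, f⟩ => hr (by rw [e, f])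
    simp [Matrix.kroneckerMap_apply, ← ite_and]
    tauto
  · simp

lemma exists_perm_pair {d : ℕ} {i j k l : Fin d} (h : i ≠ j) (h' : k ≠ l) :
    ∃ σ : Equiv.Perm (Fin d), σ i = k ∧ σ j = l := by
  refine ⟨(Equiv.swap i k).trans (Equiv.swap (Equiv.swap i k j) l), ?_, by simp⟩
  rw [Equiv.trans_apply, Equiv.swap_apply_left]
  refine Equiv.swap_apply_of_ne_of_ne (fun e => h ?_) h'
  exact (Equiv.swap i k).injective ((Equiv.swap_apply_left i k).trans e)

/-- The relation `c = a + b` between the three types of entries, read off from the entry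
`((i, j), (i, i))` of `A (V ⊗ V) = (V ⊗ V) A` for a unitary `V` with `V i i` and `V j i` nonzero. -/
lemma comm_diag {d : ℕ} {A : Matrix (Fin d × Fin d) (Fin d × Fin d) ℂ}
    (hA : ∀ V ∈ Matrix.unitaryGroup (Fin d) ℂ, A * (V ⊗ₖ V) = (V ⊗ₖ V) * A)
    {i j : Fin d} (hij : i ≠ j) :
    A (i, i) (i, i) = A (i, j) (i, j) + A (i, j) (j, i) := by
  have hd : d ≠ 0 := by rintro rfl; exact i.elim0
  have hd' : (d : ℂ) ≠ 0 := by exact_mod_cast hd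
  set V : Matrix (Fin d) (Fin d) ℂ :=
    Matrix.of fun i j : Fin d => (if i = j then (1 : ℂ) else 0) + (Complex.I - 1) / d with hV
  have h := congrFun (congrFun (hA V (phase_mem hd)) (i, j)) (i, i)
  rw [Matrix.mul_apply, Matrix.mul_apply] at h
  rw [Finset.sum_eq_add (i, j) (j, i) (by simp [hij]) (by
      rintro c - ⟨c1, c2⟩
      rw [comm_zero hA _ _ c1.symm (fun e => c2 (by rw [← Prod.swap_swap c, ← e]; rfl)), zero_mul])
      (by simp) (by simp),
    Finset.sum_eq_single (i, i) (by
      rintro c - c1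
      rw [comm_zero hA _ _ c1 c1, mul_zero]) (by simp)] at h
  simp only [Matrix.kroneckerMap_apply] at h
  have n1 : V i i ≠ 0 := by
    intro e
    simp only [hV, Matrix.of_apply, if_true] at e
    field_simp at e
    simpa using congrArg Complex.im e
  have n2 : V j i ≠ 0 := by
    intro e
    simp only [hV, Matrix.of_apply, if_neg hij.symm] at e
    field_simp at e
    simpa using congrArg Complex.im e
  have n := mul_ne_zero n1 n2
  apply mul_left_cancel₀ n
  linear_combination -h

/-- The commutant of all `V ⊗ V` is spanned by the identity and the swap operator. -/
lemma comm_form {d : ℕ} (hd : 2 ≤ d) {A : Matrix (Fin d × Fin d) (Fin d × Fin d) ℂ}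
    (hA : ∀ V ∈ Matrix.unitaryGroup (Fin d) ℂ, A * (V ⊗ₖ V) = (V ⊗ₖ V) * A) :
    ∃ a b : ℂ, A = a • (1 : Matrix (Fin d × Fin d) (Fin d × Fin d) ℂ) + b • swapOp d := by
  let x : Fin d := ⟨0, by omega⟩
  let y : Fin d := ⟨1, by omega⟩
  have hxy : x ≠ y := by simp [x, y]
  refine ⟨A (x, y) (x, y), A (x, y) (y, x), ?_⟩
  ext ⟨i, j⟩ ⟨k, l⟩
  simp only [Matrix.add_apply, Matrix.smul_apply, Matrix.one_apply, swapOp, Matrix.of_apply,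
    Prod.mk.injEq, smul_eq_mul, mul_ite, mul_one, mul_zero]
  by_cases h1 : i = k ∧ j = l
  · obtain ⟨rfl, rfl⟩ := h1
    by_cases hij : i = j
    · subst hij
      have h := comm_perm hA (Equiv.swap x i) x x x x
      rw [Equiv.swap_apply_left] at h
      simp [h, comm_diag hA hxy]
    · obtain ⟨σ, rfl, rfl⟩ := exists_perm_pair hxy hij
      rw [comm_perm hA σ]
      simp [hxy]
  · by_cases h2 : i = l ∧ j = k
    · obtain ⟨rfl, rfl⟩ := h2
      have hij : i ≠ j := fun e => h1 ⟨e, e.symm⟩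
      obtain ⟨σ, rfl, rfl⟩ := exists_perm_pair hxy hij
      rw [comm_perm hA σ]
      simp [hxy]
    · rw [if_neg h1, if_neg h2, comm_zero hA] <;> simp <;> tauto

/-! ### The swap operator and the two trace identities -/

lemma swapOp_mul_apply {d : ℕ} (A : Matrix (Fin d × Fin d) (Fin d × Fin d) ℂ)
    (p q : Fin d × Fin d) : (swapOp d * A) p q = A p.swap q := by
  rw [Matrix.mul_apply, Finset.sum_eq_single p.swap]
  · simp [swapOp]
  · rintro r - hr
    rw [swapOp, Matrix.of_apply, if_neg, zero_mul]
    rintro ⟨h1, h2⟩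
    exact hr (Prod.ext h2.symm h1.symm)
  · simp

lemma mul_swapOp_apply {d : ℕ} (A : Matrix (Fin d × Fin d) (Fin d × Fin d) ℂ)
    (p q : Fin d × Fin d) : (A * swapOp d) p q = A p q.swap := by
  rw [Matrix.mul_apply, Finset.sum_eq_single q.swap]
  · simp [swapOp]
  · rintro r - hr
    rw [swapOp, Matrix.of_apply, if_neg, mul_zero]
    rintro ⟨h1, h2⟩
    exact hr (Prod.ext h1 h2)
  · simp

lemma swapOp_comm {d : ℕ} (U : Matrix (Fin d) (Fin d) ℂ) :
    swapOp d * (U ⊗ₖ U) = (U ⊗ₖ U) * swapOp d := by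
  ext p q
  simp [swapOp_mul_apply, mul_swapOp_apply, mul_comm]

lemma swapOp_sq (d : ℕ) : swapOp d * swapOp d = 1 := by
  ext p q
  rw [swapOp_mul_apply]
  simp [swapOp, Matrix.one_apply, Prod.ext_iff, and_comm]

lemma trace_swapOp (d : ℕ) : (swapOp d).trace = d := by
  simp only [Matrix.trace, Matrix.diag_apply, swapOp, Matrix.of_apply, Fintype.sum_prod_type]
  have : ∀ x y : Fin d, (x = y ∧ y = x) ↔ x = y := fun x y => ⟨And.left, fun h => ⟨h, h.symm⟩⟩
  simp [this]

/-- Traces against an operator `B` commuting with every `U ⊗ U` survive the twirl. -/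
lemma trace_twirl {d : ℕ} (μ : Measure (Matrix.unitaryGroup (Fin d) ℂ))
    [IsProbabilityMeasure μ] (X B : Matrix (Fin d × Fin d) (Fin d × Fin d) ℂ)
    (hB : ∀ U : Matrix (Fin d) (Fin d) ℂ, B * (U ⊗ₖ U) = (U ⊗ₖ U) * B) :
    (B * twirl μ X).trace = (B * X).trace := by
  have h := map_twirl μ X ((Matrix.traceLinearMap _ ℂ ℂ).comp (LinearMap.mulLeft ℂ B))
  simp only [LinearMap.comp_apply, LinearMap.mulLeft_apply, Matrix.traceLinearMap_apply] at h
  rw [h]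
  have hc : ∀ U : Matrix.unitaryGroup (Fin d) ℂ,
      (B * conjTwo X (U : Matrix (Fin d) (Fin d) ℂ)).trace = (B * X).trace := by
    intro U
    rw [conjTwo, ← Matrix.mul_assoc, ← Matrix.mul_assoc, hB, Matrix.trace_mul_comm,
      ← Matrix.mul_assoc, ← Matrix.mul_assoc]
    have hW := (Unitary.mem_iff.1 (kron_self_mem U.2)).1
    rw [Matrix.star_eq_conjTranspose] at hW
    rw [hW, Matrix.one_mul]
  simp [hc]

lemma twirl_eq {d : ℕ} (hd : 2 ≤ d) (μ : Measure (Matrix.unitaryGroup (Fin d) ℂ))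
    [IsProbabilityMeasure μ]
    (hinv : ∀ V : Matrix.unitaryGroup (Fin d) ℂ, μ.map (fun U => V * U) = μ)
    (X : Matrix (Fin d × Fin d) (Fin d × Fin d) ℂ) :
    twirl μ X =
      (((d : ℂ) * ((d : ℂ) ^ 2 - 1))⁻¹ * (d * X.trace - (swapOp d * X).trace)) •
        (1 : Matrix (Fin d × Fin d) (Fin d × Fin d) ℂ) +
      (((d : ℂ) * ((d : ℂ) ^ 2 - 1))⁻¹ * (d * (swapOp d * X).trace - X.trace)) • swapOp d := by
  obtain ⟨a, b, hab⟩ := comm_form hd fun V hV => twirl_comm μ hinv X hV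
  have t1 := trace_twirl μ X 1 (fun U => by simp)
  have t2 := trace_twirl μ X (swapOp d) swapOp_comm
  rw [hab] at t1 t2
  simp only [Matrix.mul_add, Matrix.mul_smul, Matrix.mul_one, Matrix.one_mul, swapOp_sq,
    Matrix.trace_add, Matrix.trace_smul, trace_swapOp, Matrix.trace_one, Fintype.card_prod,
    Fintype.card_fin, smul_eq_mul, Nat.cast_mul] at t1 t2
  have h0 : (d : ℂ) ≠ 0 := by exact_mod_cast (by omega : d ≠ 0)
  have h1 : (d : ℂ) ^ 2 - 1 ≠ 0 := by
    have : 1 < d ^ 2 := by nlinarith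
    rw [sub_ne_zero]
    exact_mod_cast this.ne'
  rw [hab, ← t1, ← t2]
  congr 2 <;> field_simp <;> ring

/-! ### Reduction to blocks of the third factor -/

/-- Conjugation by `W ⊗ 1` acts on each `β`-block separately. -/
lemma conj_kron_one_apply {α β : Type*} [Fintype α] [Fintype β] [DecidableEq β]
    (W : Matrix α α ℂ) (M : Matrix (α × β) (α × β) ℂ) (p q : α) (b c : β) :
    ((W ⊗ₖ (1 : Matrix β β ℂ)) * M * (W ⊗ₖ (1 : Matrix β β ℂ))ᴴ) (p, b) (q, c) =
      (W * M.submatrix (fun i => (i, b)) (fun i => (i, c)) * Wᴴ) p q := by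
  simp [Matrix.mul_apply, Fintype.sum_prod_type, Matrix.one_apply, apply_ite]

lemma ptraceFst_kron_one_mul {α β : Type*} [Fintype α] [Fintype β] [DecidableEq β]
    (W : Matrix α α ℂ) (M : Matrix (α × β) (α × β) ℂ) (b c : β) :
    ptraceFst ((W ⊗ₖ (1 : Matrix β β ℂ)) * M) b c =
      (W * M.submatrix (fun i => (i, b)) (fun i => (i, c))).trace := by
  simp [ptraceFst, Matrix.trace, Matrix.mul_apply, Fintype.sum_prod_type, Matrix.one_apply]

/-- **Two-fold Haar twirl (Schur's lemma computation)**: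
`∫ (U⊗U⊗I) M (U⊗U⊗I)† dU = I ⊗ R^𝟙 + F ⊗ R^F`, where the integral is against
the Haar probability measure on `U(d)` (here: any left-invariant Borel
probability measure, which on the compact group `U(d)` is necessarily Haar). -/
theorem haar_two_twirl (d dB : ℕ) (hd : 2 ≤ d) (hB : 1 ≤ dB)
    (M : Matrix ((Fin d × Fin d) × Fin dB) ((Fin d × Fin d) × Fin dB) ℂ)
    (μ : Measure (Matrix.unitaryGroup (Fin d) ℂ)) [IsProbabilityMeasure μ]
    (hinv : ∀ V : Matrix.unitaryGroup (Fin d) ℂ, μ.map (fun U => V * U) = μ)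
    (R1 RF : Matrix (Fin dB) (Fin dB) ℂ)
    (hR1 : R1 = ((d : ℂ) * ((d : ℂ) ^ 2 - 1))⁻¹ •
      ((d : ℂ) • ptraceFst M -
        ptraceFst ((swapOp d ⊗ₖ (1 : Matrix (Fin dB) (Fin dB) ℂ)) * M)))
    (hRF : RF = ((d : ℂ) * ((d : ℂ) ^ 2 - 1))⁻¹ •
      ((d : ℂ) • ptraceFst ((swapOp d ⊗ₖ (1 : Matrix (Fin dB) (Fin dB) ℂ)) * M) -
        ptraceFst M)) :
    ∀ p q, (∫ U : Matrix.unitaryGroup (Fin d) ℂ,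
        (((((U : Matrix (Fin d) (Fin d) ℂ) ⊗ₖ (U : Matrix (Fin d) (Fin d) ℂ)) ⊗ₖ
            (1 : Matrix (Fin dB) (Fin dB) ℂ)) * M *
          ((((U : Matrix (Fin d) (Fin d) ℂ) ⊗ₖ (U : Matrix (Fin d) (Fin d) ℂ)) ⊗ₖ
            (1 : Matrix (Fin dB) (Fin dB) ℂ))ᴴ)) p q) ∂μ)
      = ((1 : Matrix (Fin d × Fin d) (Fin d × Fin d) ℂ) ⊗ₖ R1 + swapOp d ⊗ₖ RF) p q := by
  rintro ⟨p, b⟩ ⟨q, c⟩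
  simp only [conj_kron_one_apply]
  have h := congrFun (congrFun
    (twirl_eq hd μ hinv (M.submatrix (fun i => (i, b)) (fun i => (i, c)))) p) q
  refine h.trans ?_
  have hM : ptraceFst M b c = (M.submatrix (fun i => (i, b)) (fun i => (i, c))).trace := rfl
  rw [hR1, hRF]
  simp only [Matrix.add_apply, Matrix.smul_apply, Matrix.kroneckerMap_apply, Matrix.sub_apply,
    ptraceFst_kron_one_mul, hM, smul_eq_mul]
  ring
end

section
/- Let d ≥ 2 and consider three registers C, C', B̃, each with Hilbert space ℂ^d. Let Π⁻ = I_{d²} − φ⁺_d be the projector on ℂ^d(C) ⊗ ℂ^d(C') orthogonal to the maximally entangled state, and define the matrix η on ℂ^d(C) ⊗ ℂ^d(C') ⊗ ℂ^d(B̃) by η = (d²/(d²−1)) · (Π⁻ ⊗ I_{B̃}) (τ_d(C) ⊗ φ⁺_d(C'B̃)) (Π⁻ ⊗ I_{B̃}), where τ_d(C) ⊗ φ⁺_d(C'B̃) denotes the state which is maximally mixed on C and maximally entangled between C' and B̃. Then the partial trace of η over C equals ((d²−2)/(d²−1)) · φ⁺_d(C'B̃) + (1/(d²−1)) · τ_d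 ⊗ τ_d. -/
/-!
Write `P = φ⁺_{CC'} ⊗ I` and `T = τ_C ⊗ φ⁺_{C'B̃}`, and expand
`(1 - P) T (1 - P) = T - P T - T P + P T P`. The partial trace over `C` of the four terms is
`φ⁺`, `d⁻² φ⁺`, `d⁻² φ⁺` and `d⁻² τ ⊗ τ`, which gives `(1 - 2/d²) φ⁺ + d⁻² τ ⊗ τ` before the
normalisation `d²/(d² - 1)`. The four traces are read off from the matrix entries: multiplication
by `P` sums a row or column index over the diagonal of `C × C'` (`mesDensity_kron_mul`,
`mul_mesDensity_kron`).
-/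

open scoped Kronecker ComplexOrder Matrix

/-- The maximally entangled state vector `|φ⁺_d⟩ = d^{−1/2} ∑_i |i⟩⊗|i⟩` on `ℂ^d ⊗ ℂ^d`. -/
noncomputable def mes (d : ℕ) : Fin d × Fin d → ℂ :=
  fun p => if p.1 = p.2 then ((Real.sqrt d : ℝ) : ℂ)⁻¹ else 0

/-- The maximally entangled density matrix `φ⁺_d = |φ⁺_d⟩⟨φ⁺_d|` on `ℂ^d ⊗ ℂ^d`. -/
noncomputable def mesDensity (d : ℕ) : Matrix (Fin d × Fin d) (Fin d × Fin d) ℂ :=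
  Matrix.vecMulVec (mes d) (star (mes d))

/-- The state `τ_d(C) ⊗ φ⁺_d(C'B̃)` on registers `C ⊗ C' ⊗ B̃` (indexed as `(C × C') × B̃`):
maximally mixed on `C` and maximally entangled between `C'` and `B̃`. -/
noncomputable def tauMes (d : ℕ) :
    Matrix ((Fin d × Fin d) × Fin d) ((Fin d × Fin d) × Fin d) ℂ :=
  Matrix.of fun p q =>
    ((d : ℂ)⁻¹ * (if p.1.1 = q.1.1 then 1 else 0)) *
      mesDensity d (p.1.2, p.2) (q.1.2, q.2)

/-- Partial trace over the register `C` (the first factor of `(C × C') × B̃`). -/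
noncomputable def ptraceC (d : ℕ)
    (M : Matrix ((Fin d × Fin d) × Fin d) ((Fin d × Fin d) × Fin d) ℂ) :
    Matrix (Fin d × Fin d) (Fin d × Fin d) ℂ :=
  Matrix.of fun p q => ∑ c, M ((c, p.1), p.2) ((c, q.1), q.2)

theorem mesDensity_apply (d : ℕ) (p q : Fin d × Fin d) :
    mesDensity d p q = if p.1 = p.2 ∧ q.1 = q.2 then (d : ℂ)⁻¹ else 0 := by
  have h : ((Real.sqrt d : ℝ) : ℂ) * ((Real.sqrt d : ℝ) : ℂ) = d := by
    rw [← Complex.ofReal_mul, Real.mul_self_sqrt (Nat.cast_nonneg d), Complex.ofReal_natCast]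
  by_cases h1 : p.1 = p.2 <;> by_cases h2 : q.1 = q.2 <;>
    simp [mesDensity, mes, Matrix.vecMulVec_apply, h1, h2, ← mul_inv, h]

theorem tauMes_apply (d : ℕ) (c a b c' a' b' : Fin d) :
    tauMes d ((c, a), b) ((c', a'), b') =
      if c = c' ∧ a = b ∧ a' = b' then (d : ℂ)⁻¹ * (d : ℂ)⁻¹ else 0 := by
  simp only [tauMes, Matrix.of_apply, mesDensity_apply]
  split_ifs <;> simp_all

theorem mesDensity_kron_mul (d : ℕ)
    (M : Matrix ((Fin d × Fin d) × Fin d) ((Fin d × Fin d) × Fin d) ℂ)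
    (c a b : Fin d) (q : (Fin d × Fin d) × Fin d) :
    ((mesDensity d ⊗ₖ (1 : Matrix (Fin d) (Fin d) ℂ)) * M) ((c, a), b) q =
      if c = a then (d : ℂ)⁻¹ * ∑ k, M ((k, k), b) q else 0 := by
  by_cases h : c = a <;>
    simp [Matrix.mul_apply, Fintype.sum_prod_type, Matrix.kroneckerMap_apply, mesDensity_apply,
      Matrix.one_apply, h, Finset.mul_sum, ite_mul]

theorem mul_mesDensity_kron (d : ℕ)
    (M : Matrix ((Fin d × Fin d) × Fin d) ((Fin d × Fin d) × Fin d) ℂ)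
    (p : (Fin d × Fin d) × Fin d) (c a b : Fin d) :
    (M * (mesDensity d ⊗ₖ (1 : Matrix (Fin d) (Fin d) ℂ))) p ((c, a), b) =
      if c = a then (d : ℂ)⁻¹ * ∑ k, M p ((k, k), b) else 0 := by
  by_cases h : c = a <;>
    simp [Matrix.mul_apply, Fintype.sum_prod_type, Matrix.kroneckerMap_apply, mesDensity_apply,
      Matrix.one_apply, h, Finset.mul_sum, mul_comm]

theorem ptraceC_tauMes (d : ℕ) (hd : (d : ℂ) ≠ 0) :
    ptraceC d (tauMes d) = mesDensity d := by
  ext ⟨a, b⟩ ⟨a', b'⟩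
  by_cases h1 : a = b <;> by_cases h2 : a' = b' <;>
    simp [ptraceC, tauMes_apply, mesDensity_apply, h1, h2, hd]

theorem ptraceC_mesDensity_kron_mul_tauMes (d : ℕ) :
    ptraceC d ((mesDensity d ⊗ₖ (1 : Matrix (Fin d) (Fin d) ℂ)) * tauMes d) =
      ((d : ℂ) ^ 2)⁻¹ • mesDensity d := by
  ext ⟨a, b⟩ ⟨a', b'⟩
  by_cases h1 : a = b <;> by_cases h2 : a' = b' <;>
    simp [ptraceC, mesDensity_kron_mul, tauMes_apply, mesDensity_apply, h1, h2, ite_and] <;> ring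

theorem ptraceC_tauMes_mul_mesDensity_kron (d : ℕ) :
    ptraceC d (tauMes d * (mesDensity d ⊗ₖ (1 : Matrix (Fin d) (Fin d) ℂ))) =
      ((d : ℂ) ^ 2)⁻¹ • mesDensity d := by
  ext ⟨a, b⟩ ⟨a', b'⟩
  by_cases h1 : a = b <;> by_cases h2 : a' = b' <;>
    simp [ptraceC, mul_mesDensity_kron, tauMes_apply, mesDensity_apply, h1, h2, ite_and] <;> ring

theorem ptraceC_mesDensity_kron_conj_tauMes (d : ℕ) :
    ptraceC d ((mesDensity d ⊗ₖ (1 : Matrix (Fin d) (Fin d) ℂ)) * tauMes d *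
        (mesDensity d ⊗ₖ (1 : Matrix (Fin d) (Fin d) ℂ))) =
      ((d : ℂ) ^ 2)⁻¹ • (((d : ℂ)⁻¹ • (1 : Matrix (Fin d) (Fin d) ℂ)) ⊗ₖ
            ((d : ℂ)⁻¹ • (1 : Matrix (Fin d) (Fin d) ℂ))) := by
  ext ⟨a, b⟩ ⟨a', b'⟩
  by_cases h1 : a = a' <;> by_cases h2 : b = b' <;>
    simp [ptraceC, mul_mesDensity_kron, mesDensity_kron_mul, tauMes_apply, Matrix.one_apply,
      Matrix.kroneckerMap_apply, h1, h2, ite_and, eq_comm (a := a') (b := a)] <;> ring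

theorem ptraceC_add (d : ℕ) (M N : Matrix ((Fin d × Fin d) × Fin d) ((Fin d × Fin d) × Fin d) ℂ) :
    ptraceC d (M + N) = ptraceC d M + ptraceC d N := by
  ext p q
  simp [ptraceC, Finset.sum_add_distrib]

theorem ptraceC_sub (d : ℕ) (M N : Matrix ((Fin d × Fin d) × Fin d) ((Fin d × Fin d) × Fin d) ℂ) :
    ptraceC d (M - N) = ptraceC d M - ptraceC d N := by
  ext p q
  simp [ptraceC, Finset.sum_sub_distrib]

theorem ptraceC_smul (d : ℕ) (x : ℂ)
    (M : Matrix ((Fin d × Fin d) × Fin d) ((Fin d × Fin d) × Fin d) ℂ) :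
    ptraceC d (x • M) = x • ptraceC d M := by
  ext p q
  simp [ptraceC, Finset.mul_sum]

/-- The `C`-marginal of the CJ state of the "ciphertext-extraction minus identity" attack:
with `Π⁻ = I − φ⁺` and `η = (d²/(d²−1))·(Π⁻ ⊗ I)(τ_C ⊗ φ⁺_{C'B̃})(Π⁻ ⊗ I)`, one has
`Tr_C η = ((d²−2)/(d²−1))·φ⁺_{C'B̃} + (1/(d²−1))·τ ⊗ τ`. -/
theorem ptraceC_projected_extraction (d : ℕ) (hd : 2 ≤ d) :
    ptraceC d (((d : ℂ) ^ 2 / ((d : ℂ) ^ 2 - 1)) •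
      ((((1 : Matrix (Fin d × Fin d) (Fin d × Fin d) ℂ) - mesDensity d) ⊗ₖ
          (1 : Matrix (Fin d) (Fin d) ℂ)) *
        tauMes d *
        (((1 : Matrix (Fin d × Fin d) (Fin d × Fin d) ℂ) - mesDensity d) ⊗ₖ
          (1 : Matrix (Fin d) (Fin d) ℂ))))
      = (((d : ℂ) ^ 2 - 2) / ((d : ℂ) ^ 2 - 1)) • mesDensity d +
        ((d : ℂ) ^ 2 - 1)⁻¹ •
          (((d : ℂ)⁻¹ • (1 : Matrix (Fin d) (Fin d) ℂ)) ⊗ₖ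
            ((d : ℂ)⁻¹ • (1 : Matrix (Fin d) (Fin d) ℂ))) := by
  have h0 : (d : ℂ) ≠ 0 := Nat.cast_ne_zero.mpr (by omega)
  have h1 : (d : ℂ) ^ 2 - 1 ≠ 0 := by
    rw [sub_ne_zero]
    have h : d ^ 2 ≠ 1 := by nlinarith
    exact_mod_cast h
  have hP : (((1 : Matrix (Fin d × Fin d) (Fin d × Fin d) ℂ) - mesDensity d) ⊗ₖ
      (1 : Matrix (Fin d) (Fin d) ℂ)) =
      1 - mesDensity d ⊗ₖ (1 : Matrix (Fin d) (Fin d) ℂ) := by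
    ext p q
    have h := congrFun (congrFun (Matrix.one_kronecker_one (α := ℂ) (m := Fin d × Fin d)
      (n := Fin d)) p) q
    simp only [Matrix.sub_apply, Matrix.kroneckerMap_apply, sub_mul] at h ⊢
    rw [h]
  have hexp : ∀ P T : Matrix ((Fin d × Fin d) × Fin d) ((Fin d × Fin d) × Fin d) ℂ,
      (1 - P) * T * (1 - P) = T - P * T - T * P + P * T * P := by
    intro P T
    noncomm_ring
  rw [hP, hexp, ptraceC_smul, ptraceC_add, ptraceC_sub, ptraceC_sub, ptraceC_tauMes d h0,
    ptraceC_mesDensity_kron_mul_tauMes, ptraceC_tauMes_mul_mesDensity_kron,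
    ptraceC_mesDensity_kron_conj_tauMes]
  match_scalars <;> field_simp
  ring
end

section
/- Let d_A, d_T, d_B, d_{B'} be positive integers and set d_C = d_A·d_T, identifying ℂ^{d_C} = ℂ^{d_A} ⊗ ℂ^{d_T}. Let {U_k}_{k∈K} ⊂ U(d_C) be a finite exact unitary 2-design. Let V be an isometry from ℂ^{d_C} ⊗ ℂ^{d_B} to ℂ^{d_C} ⊗ ℂ^{d_{B'}} (i.e., V†V = I). Define the d_{B'} × d_B matrix Γ_V = (1/d_C) ∑_{i=0}^{d_C−1} (⟨i| ⊗ I_{d_{B'}}) V (|i⟩ ⊗ I_{d_B}), and for each k ∈ K define the linear map Φ_k from ℂ^{d_A} ⊗ ℂ^{d_B} to ℂ^{d_A} ⊗ ℂ^{d_{B'}} by Φ_k = (I_{d_A} ⊗ ⟨0|_T ⊗ I_{d_{B'}}) (U_k† ⊗ I_{d_{B'}}) V (U_k ⊗ I_{d_B}) (I_{d_A} ⊗ |0⟩_T ⊗ I_{d_B}), where |0⟩_T is the first standard basis vector of ℂ^{d_T}. Then for every unit vector ψ ∈ ℂ^{d_A} ⊗ ℂ^{d_B}: (1/|K|) ∑_{k∈K}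 ‖((I_{d_A} ⊗ Γ_V) − Φ_k) ψ‖₂² ≤ 1/d_T. -/
/-!
Write `W = V - 1 ⊗ Γ`. Its blocks `W_{cb}` on the cipher register are traceless, and since the `U_k`
are unitary, `Φ_k - 1 ⊗ Γ` is the compression of `U_kᴴ W U_k` by the isometry `E : |a⟩ ↦ |a, 0⟩`.
The averaged squared norm is thus a second moment of the design.

By the design property this moment is a Haar twirl, so it lies in the commutant of all `V ⊗ V`
(`commute_twirl`). That commutant is spanned by the identity and the swap (`commutant_formula`); here
this follows from the relations that the matrices `E_ij ⊗ 1 + 1 ⊗ E_ij` impose. The swap component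
pairs to zero with traceless blocks, and with `d = dA * dT` the average `S` satisfies
`d (d² - 1) S = (d dA - 1) R`, where `R = ∑ ‖∑ b, ψ(a,b) W_{cb}(x,y)‖²` (`twirl_normSq`,
`sum_trace_eq`). As `V` is an isometry, `R ≤ d` (`attack_bound`), so for `d ≥ 2`
`S ≤ (d dA - 1) / (d² - 1) ≤ dA / d = 1 / dT`. For `d = 1` the blocks `W_{cb}` vanish.
-/

open scoped Kronecker ComplexOrder Matrix
open MeasureTheory

/-! ### Invariance of the twirl -/

instance borelSpace_unitaryGroup {n : Type*} [Fintype n] [DecidableEq n] :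
    BorelSpace (Matrix.unitaryGroup n ℂ) := ⟨rfl⟩

section
variable {ι : Type*} [Fintype ι] [DecidableEq ι]

/-- The entries of `(W ⊗ W) X (W ⊗ W)ᴴ` are continuous in `W`, and integrable because the entries
of a unitary matrix have modulus at most one. -/
theorem integrable_twirl (μ : Measure (Matrix.unitaryGroup ι ℂ)) [IsProbabilityMeasure μ]
    (X : Matrix (ι × ι) (ι × ι) ℂ) (p q : ι × ι) :
    Continuous (fun W : Matrix.unitaryGroup ι ℂ =>
      (((W : Matrix ι ι ℂ) ⊗ₖ (W : Matrix ι ι ℂ)) * X *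
        ((W : Matrix ι ι ℂ) ⊗ₖ (W : Matrix ι ι ℂ))ᴴ) p q) ∧
    Integrable (fun W : Matrix.unitaryGroup ι ℂ =>
      (((W : Matrix ι ι ℂ) ⊗ₖ (W : Matrix ι ι ℂ)) * X *
        ((W : Matrix ι ι ℂ) ⊗ₖ (W : Matrix ι ι ℂ))ᴴ) p q) μ := by
  have hK : Continuous fun W : Matrix.unitaryGroup ι ℂ =>
      ((W : Matrix ι ι ℂ) ⊗ₖ (W : Matrix ι ι ℂ)) := by
    refine continuous_matrix fun i j => ?_
    simp only [Matrix.kroneckerMap_apply]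
    exact (continuous_subtype_val.matrix_elem _ _).mul (continuous_subtype_val.matrix_elem _ _)
  have hc := ((hK.matrix_mul (continuous_const (y := X))).matrix_mul
    hK.matrix_conjTranspose).matrix_elem p q
  refine ⟨hc, Integrable.of_bound hc.aestronglyMeasurable
    (∑ s, ∑ r, ‖X r s‖) (Filter.Eventually.of_forall fun W => ?_)⟩
  have hW : ∀ i j, ‖((W : Matrix ι ι ℂ) ⊗ₖ (W : Matrix ι ι ℂ)) i j‖ ≤ 1 := fun i j => by
    rw [Matrix.kroneckerMap_apply, norm_mul]
    exact mul_le_one₀ (entry_norm_bound_of_unitary W.2 _ _) (norm_nonneg _)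
      (entry_norm_bound_of_unitary W.2 _ _)
  rw [Matrix.mul_apply]
  refine (norm_sum_le _ _).trans (Finset.sum_le_sum fun s _ => ?_)
  rw [norm_mul, Matrix.conjTranspose_apply, norm_star, Matrix.mul_apply]
  refine (mul_le_of_le_one_right (norm_nonneg _) (hW _ _)).trans ?_
  refine (norm_sum_le _ _).trans (Finset.sum_le_sum fun r _ => ?_)
  rw [norm_mul]
  exact mul_le_of_le_one_left (norm_nonneg _) (hW _ _)

/-- Left invariance of `μ` makes the twirl `M = ∫ (W ⊗ W) X (W ⊗ W)ᴴ dμ(W)` commute with every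
`V ⊗ V`. -/
theorem commute_twirl (μ : Measure (Matrix.unitaryGroup ι ℂ)) [IsProbabilityMeasure μ]
    (hinv : ∀ V : Matrix.unitaryGroup ι ℂ, μ.map (fun W => V * W) = μ)
    (X M : Matrix (ι × ι) (ι × ι) ℂ)
    (hM : ∀ p q, M p q = ∫ W : Matrix.unitaryGroup ι ℂ,
      (((W : Matrix ι ι ℂ) ⊗ₖ (W : Matrix ι ι ℂ)) * X *
        ((W : Matrix ι ι ℂ) ⊗ₖ (W : Matrix ι ι ℂ))ᴴ) p q ∂μ)
    (V : Matrix ι ι ℂ) (hV : V ∈ Matrix.unitaryGroup ι ℂ) :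
    Commute M (V ⊗ₖ V) := by
  have key : (V ⊗ₖ V) * M * (V ⊗ₖ V)ᴴ = M := by
    ext p q
    rw [hM p q]
    conv_rhs => rw [← hinv ⟨V, hV⟩]
    rw [integral_map (by fun_prop)
      (integrable_twirl μ X p q).1.aestronglyMeasurable]
    have : ∀ W : Matrix.unitaryGroup ι ℂ,
        (((((⟨V, hV⟩ * W : Matrix.unitaryGroup ι ℂ) : Matrix ι ι ℂ) ⊗ₖ
          ((⟨V, hV⟩ * W : Matrix.unitaryGroup ι ℂ) : Matrix ι ι ℂ)) * X *
        (((⟨V, hV⟩ * W : Matrix.unitaryGroup ι ℂ) : Matrix ι ι ℂ) ⊗ₖ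
          ((⟨V, hV⟩ * W : Matrix.unitaryGroup ι ℂ) : Matrix ι ι ℂ))ᴴ) p q) =
        ∑ s, ∑ r, (V ⊗ₖ V) p r * ((((W : Matrix ι ι ℂ) ⊗ₖ (W : Matrix ι ι ℂ)) * X *
        ((W : Matrix ι ι ℂ) ⊗ₖ (W : Matrix ι ι ℂ))ᴴ) r s) * (V ⊗ₖ V)ᴴ s q := by
      intro W
      have h : ((⟨V, hV⟩ * W : Matrix.unitaryGroup ι ℂ) : Matrix ι ι ℂ) = V * W := rfl
      have e : ((V * (W : Matrix ι ι ℂ)) ⊗ₖ (V * (W : Matrix ι ι ℂ))) * X *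
        ((V * (W : Matrix ι ι ℂ)) ⊗ₖ (V * (W : Matrix ι ι ℂ)))ᴴ =
        (V ⊗ₖ V) * (((W : Matrix ι ι ℂ) ⊗ₖ (W : Matrix ι ι ℂ)) * X *
        ((W : Matrix ι ι ℂ) ⊗ₖ (W : Matrix ι ι ℂ))ᴴ) * (V ⊗ₖ V)ᴴ := by
        rw [Matrix.mul_kronecker_mul, Matrix.conjTranspose_mul]
        simp only [Matrix.mul_assoc]
      rw [h, e, Matrix.mul_apply]
      simp only [Matrix.mul_apply (M := V ⊗ₖ V), Finset.sum_mul]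
    simp_rw [this]
    rw [integral_finsetSum _ fun s _ => integrable_finsetSum _ fun r _ =>
      (((integrable_twirl μ X r s).2.const_mul _).mul_const _)]
    simp_rw [Matrix.mul_apply (N := (V ⊗ₖ V)ᴴ), Matrix.mul_apply (M := V ⊗ₖ V), Finset.sum_mul]
    refine Finset.sum_congr rfl fun s _ => ?_
    rw [integral_finsetSum _ fun r _ =>
      (((integrable_twirl μ X r s).2.const_mul _).mul_const _)]
    refine Finset.sum_congr rfl fun r _ => ?_
    rw [integral_mul_const, integral_const_mul, hM]
  have hVV : (V ⊗ₖ V)ᴴ * (V ⊗ₖ V) = 1 := by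
    rw [Matrix.conjTranspose_kronecker, ← Matrix.mul_kronecker_mul]
    have : Vᴴ * V = 1 := (Matrix.mem_unitaryGroup_iff'.1 hV)
    rw [this, Matrix.one_kronecker_one]
  calc M * (V ⊗ₖ V) = (V ⊗ₖ V) * M * (V ⊗ₖ V)ᴴ * (V ⊗ₖ V) := by rw [key]
    _ = (V ⊗ₖ V) * M := by rw [Matrix.mul_assoc, hVV, Matrix.mul_one]

/-! ### The commutant of the tensor square -/

/-- `P ⊗ 1 + 1 ⊗ P`, the action of `P`, viewed in the Lie algebra of the general linear group, on the
tensor square. -/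
def deriv2 (P : Matrix ι ι ℂ) : Matrix (ι × ι) (ι × ι) ℂ := P ⊗ₖ 1 + 1 ⊗ₖ P

omit [Fintype ι] in
theorem deriv2_add (P Q : Matrix ι ι ℂ) : deriv2 (P + Q) = deriv2 P + deriv2 Q := by
  ext p q; simp [deriv2]; ring

omit [Fintype ι] in
theorem deriv2_smul (c : ℂ) (P : Matrix ι ι ℂ) : deriv2 (c • P) = c • deriv2 P := by
  ext p q; simp [deriv2]; ring

/-- For an orthogonal projection `P` and `|z| = 1` the matrix `1 + (z - 1) P` is unitary, and its
tensor square is `1 + (z - 1) (P ⊗ 1 + 1 ⊗ P) + (z - 1)² P ⊗ P`. Commutation for the two values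
`z = -1` and `z = i` separates the linear from the quadratic term. -/
theorem commute_deriv2_of_proj (M : Matrix (ι × ι) (ι × ι) ℂ)
    (hM : ∀ V ∈ Matrix.unitaryGroup ι ℂ, Commute M (V ⊗ₖ V))
    (P : Matrix ι ι ℂ) (hP : P * P = P) (hP' : Pᴴ = P) : Commute M (deriv2 P) := by
  have hz : ∀ z : ℂ, z * star z = 1 → 
      Commute M ((z - 1) • deriv2 P + ((z - 1) * (z - 1)) • (P ⊗ₖ P)) := by
    intro z hz
    have hu : (1 + (z - 1) • P) ∈ Matrix.unitaryGroup ι ℂ := by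
      rw [Matrix.mem_unitaryGroup_iff, Matrix.star_eq_conjTranspose]
      rw [Matrix.conjTranspose_add, Matrix.conjTranspose_smul, hP', Matrix.conjTranspose_one]
      have : (1 + (z - 1) • P) * (1 + star (z - 1) • P)
          = 1 + ((z - 1) + star (z-1) + (z - 1) * star (z-1)) • P := by
        rw [mul_add, add_mul, add_mul]
        simp only [mul_one, one_mul, Matrix.smul_mul, Matrix.mul_smul, hP, smul_smul]
        module
      rw [this]
      have : (z - 1) + star (z-1) + (z - 1) * star (z-1) = 0 := by
        rw [star_sub, star_one]; linear_combination hz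
      rw [this]; simp
    have h := hM _ hu
    have e : (1 + (z - 1) • P) ⊗ₖ (1 + (z - 1) • P) =
        1 + ((z - 1) • deriv2 P + ((z - 1) * (z - 1)) • (P ⊗ₖ P)) := by
      rw [← Matrix.one_kronecker_one]
      ext p q
      simp only [deriv2, Matrix.kroneckerMap_apply, Matrix.add_apply, Matrix.smul_apply, smul_eq_mul]
      ring
    rw [e] at h
    have := h.sub_right (Commute.one_right M)
    rwa [add_sub_cancel_left] at this
  have h1 := hz (-1) (by simp)
  have h2 := hz Complex.I (by simp)
  have h3 := ((h2.smul_right (2 : ℂ)).sub_right 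
    (h1.smul_right (((Complex.I - 1) * (Complex.I - 1)) / 2)))
  have e : (2 : ℂ) • ((Complex.I - 1) • deriv2 P + ((Complex.I - 1) * (Complex.I - 1)) • P ⊗ₖ P) -
      ((Complex.I - 1) * (Complex.I - 1) / 2) • ((-1 - 1 : ℂ) • deriv2 P + ((-1 - 1 : ℂ) * (-1 - 1)) • P ⊗ₖ P)
      = (-2 : ℂ) • deriv2 P := by
    have hI := Complex.I_sq
    have : (-2 : ℂ) = 2 * (Complex.I - 1) + (Complex.I - 1) * (Complex.I - 1) := by
      linear_combination -hI
    rw [this]; module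
  rw [e] at h3
  have := h3.smul_right (-2 : ℂ)⁻¹
  rwa [smul_smul, inv_mul_cancel₀ (by norm_num), one_smul] at this

/-- The orthogonal projections `E_ii` and `½ (E_ii + E_jj + w̄ E_ij + w E_ji)` with `w = 1, i` span
all matrix units. -/
theorem commute_deriv2_single (M : Matrix (ι × ι) (ι × ι) ℂ)
    (hM : ∀ V ∈ Matrix.unitaryGroup ι ℂ, Commute M (V ⊗ₖ V)) (i j : ι) :
    Commute M (deriv2 (Matrix.single i j 1)) := by
  have hd : ∀ i, Commute M (deriv2 (Matrix.single i i 1)) := fun i =>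
    commute_deriv2_of_proj M hM _ (by simp) (by simp)
  rcases eq_or_ne i j with rfl | hij
  · exact hd i
  have hw : ∀ w : ℂ, w * star w = 1 →
      Commute M (star w • deriv2 (Matrix.single i j 1) + w • deriv2 (Matrix.single j i 1)) := by
    intro w hw
    have hw' : star w * w = 1 := by rw [mul_comm]; exact hw
    have h := commute_deriv2_of_proj M hM
      ((1 / 2 : ℂ) • (Matrix.single i i 1 + Matrix.single j j 1 + star w • Matrix.single i j 1
        + w • Matrix.single j i 1)) (by
        simp only [Matrix.smul_mul, Matrix.mul_smul, add_mul, mul_add, smul_add, smul_smul,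
          Matrix.single_mul_single_same, Matrix.single_mul_single_of_ne _ _ _ _ hij, 
          Matrix.single_mul_single_of_ne _ _ _ _ hij.symm, mul_one, smul_zero, add_zero, zero_add]
        have e1 : (1 / 2 : ℂ) * (star w * (1 / 2 * w)) = 1 / 4 := by
          linear_combination (1 / 4) * hw'
        have e2 : (1 / 2 : ℂ) * (w * (1 / 2 * star w)) = 1 / 4 := by
          linear_combination (1 / 4) * hw
        simp only [mul_assoc, e1, e2]
        module) (by
        simp only [Matrix.conjTranspose_smul, Matrix.conjTranspose_add, Matrix.conjTranspose_single,
          star_star, star_one]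
        have : star (1 / 2 : ℂ) = 1 / 2 := by simp
        rw [this]
        module)
    rw [deriv2_smul, deriv2_add, deriv2_add, deriv2_add, deriv2_smul, deriv2_smul] at h
    have h2 := ((h.smul_right (2 : ℂ)).sub_right (hd i)).sub_right (hd j)
    refine Eq.mp (congrArg (Commute M) ?_) h2
    module
  have h1 := hw 1 (by simp)
  have h2 := (hw Complex.I (by simp)).smul_right Complex.I
  have h3 := (h1.add_right h2).smul_right (2 : ℂ)⁻¹
  refine Eq.mp (congrArg (Commute M) ?_) h3
  simp only [smul_add, smul_smul, star_one]
  have e1 : (Complex.I * star Complex.I) = 1 := by simp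
  have e2 : Complex.I * Complex.I = -1 := by simp
  rw [e1, e2]
  module

/-- Commutation with `E_ij ⊗ 1 + 1 ⊗ E_ij`, written out entrywise. -/
theorem commutant_entry {M : Matrix (ι × ι) (ι × ι) ℂ} {i j : ι}
    (h : Commute M (deriv2 (Matrix.single i j 1))) (a b c e : ι) :
    (if a = i then M (j, b) (c, e) else 0) + (if b = i then M (a, j) (c, e) else 0) =
      (if c = j then M (a, b) (i, e) else 0) + (if e = j then M (a, b) (c, i) else 0) := by
  have h0 := congrFun (congrFun h.eq (a, b)) (c, e)
  simp only [deriv2, Matrix.mul_apply, Fintype.sum_prod_type, Matrix.add_apply,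
    Matrix.kroneckerMap_apply, Matrix.single_apply, Matrix.one_apply, mul_add, add_mul,
    Finset.sum_add_distrib, ite_and, mul_ite, ite_mul, mul_one, one_mul, mul_zero, zero_mul,
    Finset.sum_ite_irrel, Finset.sum_const_zero,
    Finset.sum_ite_eq, Finset.sum_ite_eq', Finset.mem_univ, if_true] at h0
  simp only [eq_comm (b := i), eq_comm (b := j)]
  exact h0.symm

/-- The commutant of the tensor-square action is spanned by the identity and the swap, with
coefficients read off from `tr M` and `tr (swap * M)`. Both sides carry the factor `d (d² - 1)`, so
the formula is empty for `d = 1`. Contracting the entrywise relations over one index expresses `M`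
through its two partial traces, which are themselves scalar. -/
theorem commutant_formula {M : Matrix (ι × ι) (ι × ι) ℂ}
    (h : ∀ i j, Commute M (deriv2 (Matrix.single i j 1))) (a b c e : ι) :
    (Fintype.card ι : ℂ) * ((Fintype.card ι : ℂ) ^ 2 - 1) * M (a, b) (c, e) =
      ((Fintype.card ι : ℂ) * (∑ x, ∑ y, M (x, y) (x, y)) - ∑ x, ∑ y, M (x, y) (y, x)) *
        (if a = c then 1 else 0) * (if b = e then 1 else 0) +
      ((Fintype.card ι : ℂ) * (∑ x, ∑ y, M (x, y) (y, x)) - ∑ x, ∑ y, M (x, y) (x, y)) *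
        (if a = e then 1 else 0) * (if b = c then 1 else 0) := by
  obtain ⟨p, hp⟩ : ∃ p : ι → ι → ℂ, ∀ b e, p b e = ∑ x, M (x, b) (x, e) := ⟨_, fun _ _ => rfl⟩
  obtain ⟨q, hq⟩ : ∃ q : ι → ι → ℂ, ∀ b e, q b e = ∑ x, M (x, b) (e, x) := ⟨_, fun _ _ => rfl⟩
  have hp1 : ∀ i j b e, (if b = i then p j e else 0) = if e = j then p b i else 0 := by
    intro i j b e
    have := Finset.sum_congr (rfl : (Finset.univ : Finset ι) = Finset.univ)
      fun x _ => commutant_entry (h i j) x b x e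
    simp only [Finset.sum_add_distrib, Finset.sum_ite_eq', Finset.mem_univ, if_true,
      Finset.sum_ite_irrel, Finset.sum_const_zero, ← hp] at this
    exact add_left_cancel this
  have hq1 : ∀ i j b c, (if b = i then q j c else 0) = if c = j then q b i else 0 := by
    intro i j b c
    have := Finset.sum_congr (rfl : (Finset.univ : Finset ι) = Finset.univ)
      fun x _ => commutant_entry (h i j) x b c x
    simp only [Finset.sum_add_distrib, Finset.sum_ite_eq', Finset.mem_univ, if_true,
      Finset.sum_ite_irrel, Finset.sum_const_zero, ← hq] at this
    rw [add_comm] at this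
    exact add_right_cancel this
  -- The two partial traces commute with every matrix unit, so they are scalar matrices.
  have hscal : ∀ p : ι → ι → ℂ,
      (∀ i j b e, (if b = i then p j e else 0) = if e = j then p b i else 0) →
      ∀ x y, (Fintype.card ι : ℂ) * p x y = (∑ z, p z z) * if x = y then 1 else 0 := by
    intro p hp x y
    have h1 : ∀ z, p x y = p z z * if x = y then 1 else 0 := fun z => by
      simpa [eq_comm] using hp z x z y
    rw [Finset.sum_mul, ← Finset.sum_congr rfl fun z _ => h1 z]
    simp
  have hP : ∑ x, ∑ y, M (x, y) (x, y) = ∑ z, p z z := by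
    rw [Finset.sum_comm]; simp only [hp]
  have hQ : ∑ x, ∑ y, M (x, y) (y, x) = ∑ z, q z z := by
    rw [Finset.sum_comm]; simp only [hq]
  have hR : ∀ j b c e, (Fintype.card ι : ℂ) * M (j, b) (c, e) + M (b, j) (c, e) =
      (if j = c then 1 else 0) * p b e + (if j = e then 1 else 0) * q b c := by
    intro j b c e
    have := Finset.sum_congr (rfl : (Finset.univ : Finset ι) = Finset.univ)
      fun x _ => commutant_entry (h x j) x b c e
    simp only [eq_comm (a := j)]
    simpa only [Finset.sum_add_distrib, if_true, Finset.sum_const, Finset.card_univ, nsmul_eq_mul,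
      Finset.sum_ite_eq, Finset.mem_univ, Finset.sum_ite_irrel, mul_zero, ← hp,
      ← hq, ite_mul, one_mul, zero_mul] using this
  rw [hP, hQ]
  linear_combination (Fintype.card ι : ℂ) ^ 2 * hR a b c e - (Fintype.card ι : ℂ) * hR b a c e
    + (Fintype.card ι : ℂ) * (if a = c then 1 else 0) * hscal p hp1 b e
    + (Fintype.card ι : ℂ) * (if a = e then 1 else 0) * hscal q hq1 b c
    - (if b = c then 1 else 0) * hscal p hp1 a e
    - (if b = e then 1 else 0) * hscal q hq1 a c

/-! ### Second moments of the design -/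

/-- Second-moment (Weingarten) formula for a unitary 2-design, evaluated at `A ⊗ B`. The hypothesis
`hc` says that the averaged matrix commutes with all `V ⊗ V`. -/
theorem twirl_kronecker_entry {N : ℕ} (hN : 0 < N) (U : Fin N → Matrix ι ι ℂ)
    (hU : ∀ k, (U k)ᴴ * U k = 1) (A B : Matrix ι ι ℂ)
    (hc : ∀ V ∈ Matrix.unitaryGroup ι ℂ, Commute (Matrix.of fun p q => (N : ℂ)⁻¹ *
      ∑ k, ((U k ⊗ₖ U k) * (A ⊗ₖ B) * (U k ⊗ₖ U k)ᴴ) p q) (V ⊗ₖ V)) (a b c e : ι) :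
    (Fintype.card ι : ℂ) * ((Fintype.card ι : ℂ) ^ 2 - 1) *
      ((N : ℂ)⁻¹ * ∑ k, (U k * A * (U k)ᴴ) a c * (U k * B * (U k)ᴴ) b e) =
      ((Fintype.card ι : ℂ) * (A.trace * B.trace) - (A * B).trace) *
        (if a = c then 1 else 0) * (if b = e then 1 else 0) +
      ((Fintype.card ι : ℂ) * (A * B).trace - A.trace * B.trace) *
        (if a = e then 1 else 0) * (if b = c then 1 else 0) := by
  have hN' : (N : ℂ) ≠ 0 := by exact_mod_cast hN.ne'
  have hf := commutant_formula (commute_deriv2_single _ hc)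
  have hk : ∀ k, (U k ⊗ₖ U k) * (A ⊗ₖ B) * (U k ⊗ₖ U k)ᴴ =
      (U k * A * (U k)ᴴ) ⊗ₖ (U k * B * (U k)ᴴ) := fun k => by
    rw [Matrix.conjTranspose_kronecker, ← Matrix.mul_kronecker_mul, ← Matrix.mul_kronecker_mul]
  have htr : ∀ k (C : Matrix ι ι ℂ), (U k * C * (U k)ᴴ).trace = C.trace := fun k C => by
    rw [Matrix.trace_mul_comm, ← Matrix.mul_assoc, hU, Matrix.one_mul]
  simp only [Matrix.of_apply, hk, Matrix.kroneckerMap_apply] at hf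
  have hP : ∑ x, ∑ y, (N : ℂ)⁻¹ * ∑ k, (U k * A * (U k)ᴴ) x x * (U k * B * (U k)ᴴ) y y =
      A.trace * B.trace := by
    have : ∀ k, A.trace * B.trace =
        ∑ x, ∑ y, (U k * A * (U k)ᴴ) x x * (U k * B * (U k)ᴴ) y y := fun k => by
      rw [← htr k A, ← htr k B, Matrix.trace, Matrix.trace, Finset.sum_mul_sum]
      rfl
    simp_rw [← Finset.mul_sum]
    rw [Finset.sum_congr rfl fun x _ => Finset.sum_comm, Finset.sum_comm,
      ← Finset.sum_congr rfl fun k _ => this k]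
    simp [hN']
  have hQ : ∑ x, ∑ y, (N : ℂ)⁻¹ * ∑ k, (U k * A * (U k)ᴴ) x y * (U k * B * (U k)ᴴ) y x =
      (A * B).trace := by
    have : ∀ k, (A * B).trace =
        ∑ x, ∑ y, (U k * A * (U k)ᴴ) x y * (U k * B * (U k)ᴴ) y x := fun k => by
      have e : U k * (A * B) * (U k)ᴴ = (U k * A * (U k)ᴴ) * (U k * B * (U k)ᴴ) := by
        calc U k * (A * B) * (U k)ᴴ = U k * A * 1 * B * (U k)ᴴ := by
              simp only [Matrix.mul_assoc, Matrix.one_mul]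
          _ = _ := by rw [← hU k]; simp only [Matrix.mul_assoc]
      rw [← htr k (A * B), e]
      simp only [Matrix.trace, Matrix.diag_apply, Matrix.mul_apply (M := U k * A * (U k)ᴴ)]
    simp_rw [← Finset.mul_sum]
    rw [Finset.sum_congr rfl fun x _ => Finset.sum_comm, Finset.sum_comm,
      ← Finset.sum_congr rfl fun k _ => this k]
    simp [hN']
  have := hf a b c e
  rw [hP, hQ] at this
  exact this

omit [DecidableEq ι] in
theorem trace_mul₄ (P Y R Z : Matrix ι ι ℂ) :
    (P * Y * R * Z).trace = ∑ a, ∑ e, ∑ b, ∑ c, (P a c * R b e) * (Y c b * Z e a) := by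
  simp only [Matrix.trace, Matrix.diag_apply, Matrix.mul_apply, Finset.sum_mul]
  refine Finset.sum_congr rfl fun a _ => Finset.sum_congr rfl fun e _ =>
    Finset.sum_congr rfl fun b _ => Finset.sum_congr rfl fun c _ => by ring

/-- Since `Y` is traceless, only the identity component of the twirl of `A ⊗ B` contributes. -/
theorem twirl_trace {N : ℕ} (hN : 0 < N) (U : Fin N → Matrix ι ι ℂ)
    (hU : ∀ k, (U k)ᴴ * U k = 1) (A B : Matrix ι ι ℂ)
    (hc : ∀ V ∈ Matrix.unitaryGroup ι ℂ, Commute (Matrix.of fun p q => (N : ℂ)⁻¹ *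
      ∑ k, ((U k ⊗ₖ U k) * (A ⊗ₖ B) * (U k ⊗ₖ U k)ᴴ) p q) (V ⊗ₖ V))
    (Y Z : Matrix ι ι ℂ) (hY : Y.trace = 0) :
    (Fintype.card ι : ℂ) * ((Fintype.card ι : ℂ) ^ 2 - 1) *
      ((N : ℂ)⁻¹ * ∑ k, ((U k * A * (U k)ᴴ) * Y * (U k * B * (U k)ᴴ) * Z).trace) =
      ((Fintype.card ι : ℂ) * (A.trace * B.trace) - (A * B).trace) * (Y * Z).trace := by
  have h := twirl_kronecker_entry hN U hU A B hc
  have hsum : (N : ℂ)⁻¹ * ∑ k, ((U k * A * (U k)ᴴ) * Y * (U k * B * (U k)ᴴ) * Z).trace =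
      ∑ a, ∑ e, ∑ b, ∑ c, ((N : ℂ)⁻¹ * ∑ k, (U k * A * (U k)ᴴ) a c * (U k * B * (U k)ᴴ) b e) *
        (Y c b * Z e a) := by
    simp only [trace_mul₄]
    rw [Finset.sum_comm, Finset.mul_sum]
    refine Finset.sum_congr rfl fun a _ => ?_
    rw [Finset.sum_comm, Finset.mul_sum]
    refine Finset.sum_congr rfl fun e _ => ?_
    rw [Finset.sum_comm, Finset.mul_sum]
    refine Finset.sum_congr rfl fun b _ => ?_
    rw [Finset.sum_comm, Finset.mul_sum]
    refine Finset.sum_congr rfl fun c _ => ?_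
    rw [← Finset.sum_mul, mul_assoc]
  rw [hsum]
  obtain ⟨m, hm⟩ : ∃ m : ι → ι → ι → ι → ℂ, ∀ a b c e, m a b c e =
    (N : ℂ)⁻¹ * ∑ k, (U k * A * (U k)ᴴ) a c * (U k * B * (U k)ᴴ) b e := ⟨_, fun _ _ _ _ => rfl⟩
  simp only [← hm] at h ⊢
  simp only [Finset.mul_sum Finset.univ _ ((Fintype.card ι : ℂ) * ((Fintype.card ι : ℂ) ^ 2 - 1)),
    ← mul_assoc ((Fintype.card ι : ℂ) * ((Fintype.card ι : ℂ) ^ 2 - 1)), h]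
  simp only [add_mul, Finset.sum_add_distrib, mul_ite, ite_mul, mul_one, mul_zero, zero_mul,
    Finset.sum_ite_eq, Finset.sum_ite_eq', Finset.mem_univ, if_true, Finset.sum_ite_irrel,
    Finset.sum_const_zero]
  have hY' : ∑ b, Y b b = 0 := hY
  simp only [← Finset.mul_sum, ← Finset.sum_mul, hY', zero_mul, mul_zero, Finset.sum_const_zero,
    add_zero, Matrix.trace, Matrix.diag_apply, Matrix.mul_apply]

/-- Averaged squared norm of `∑ b, Eᴴ U_kᴴ W_b U_k E ψ_b`, for traceless `W_b` and an isometry `E`.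
Each summand of the expanded square is a trace to which `twirl_trace` applies with
`A = E ψ_b ψ_b'ᴴ Eᴴ` and `B = E Eᴴ`. -/
theorem twirl_normSq {α β : Type*} [Fintype α] [DecidableEq α] [Fintype β]
    {N : ℕ} (hN : 0 < N) (U : Fin N → Matrix ι ι ℂ)
    (hU : ∀ k, (U k)ᴴ * U k = 1)
    (hc : ∀ A B : Matrix ι ι ℂ, ∀ V ∈ Matrix.unitaryGroup ι ℂ,
      Commute (Matrix.of fun p q => (N : ℂ)⁻¹ *
        ∑ k, ((U k ⊗ₖ U k) * (A ⊗ₖ B) * (U k ⊗ₖ U k)ᴴ) p q) (V ⊗ₖ V))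
    (E : Matrix ι α ℂ) (hE : Eᴴ * E = 1)
    (W : β → Matrix ι ι ℂ) (hW : ∀ b, (W b).trace = 0) (ψ : β → α → ℂ) :
    (Fintype.card ι : ℂ) * ((Fintype.card ι : ℂ) ^ 2 - 1) *
      ((N : ℂ)⁻¹ * ∑ k, star (∑ b, (Eᴴ * (U k)ᴴ * W b * U k * E) *ᵥ ψ b) ⬝ᵥ
        (∑ b, (Eᴴ * (U k)ᴴ * W b * U k * E) *ᵥ ψ b)) =
      ((Fintype.card ι : ℂ) * Fintype.card α - 1) *
        ∑ b, ∑ b', (star (ψ b') ⬝ᵥ ψ b) * ((W b')ᴴ * W b).trace := by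
  have hexp : ∀ k, star (∑ b, (Eᴴ * (U k)ᴴ * W b * U k * E) *ᵥ ψ b) ⬝ᵥ
        (∑ b, (Eᴴ * (U k)ᴴ * W b * U k * E) *ᵥ ψ b) =
      ∑ b, ∑ b', ((U k * (E * Matrix.vecMulVec (ψ b) (star (ψ b')) * Eᴴ) * (U k)ᴴ) * (W b')ᴴ *
        (U k * (E * Eᴴ) * (U k)ᴴ) * W b).trace := by
    intro k
    rw [star_sum, sum_dotProduct, Finset.sum_comm]
    simp only [dotProduct_sum]
    refine Finset.sum_congr rfl fun b' _ => Finset.sum_congr rfl fun b _ => ?_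
    have hrw : (U k * (E * Matrix.vecMulVec (ψ b) (star (ψ b')) * Eᴴ) * (U k)ᴴ) * (W b')ᴴ *
        (U k * (E * Eᴴ) * (U k)ᴴ) * W b =
        (U k * E) * (Matrix.vecMulVec (ψ b) (star (ψ b')) *
          ((Eᴴ * (U k)ᴴ * W b' * U k * E)ᴴ * (Eᴴ * (U k)ᴴ * W b))) := by
      simp only [Matrix.conjTranspose_mul, Matrix.conjTranspose_conjTranspose, Matrix.mul_assoc]
    rw [hrw, Matrix.trace_mul_comm, Matrix.mul_assoc (Matrix.vecMulVec _ _), Matrix.vecMulVec_mul,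
      Matrix.trace_vecMulVec, Matrix.star_mulVec, ← Matrix.dotProduct_mulVec, dotProduct_comm (ψ b),
      ← Matrix.dotProduct_mulVec, Matrix.mulVec_mulVec]
    simp only [Matrix.mul_assoc]
  have hA : ∀ b b', (E * Matrix.vecMulVec (ψ b) (star (ψ b')) * Eᴴ).trace = star (ψ b') ⬝ᵥ ψ b := by
    intro b b'
    rw [Matrix.trace_mul_comm, ← Matrix.mul_assoc, hE, Matrix.one_mul, Matrix.trace_vecMulVec,
      dotProduct_comm]
  have hB : (E * Eᴴ).trace = Fintype.card α := by
    rw [Matrix.trace_mul_comm, hE, Matrix.trace_one]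
  have hAB : ∀ b b', ((E * Matrix.vecMulVec (ψ b) (star (ψ b')) * Eᴴ) * (E * Eᴴ)).trace =
      star (ψ b') ⬝ᵥ ψ b := by
    intro b b'
    rw [Matrix.mul_assoc _ Eᴴ, ← Matrix.mul_assoc Eᴴ, hE, Matrix.one_mul, hA]
  simp only [hexp]
  rw [Finset.sum_comm, Finset.sum_congr rfl fun b _ => Finset.sum_comm]
  simp only [Finset.mul_sum _ _ ((N : ℂ)⁻¹)]
  simp only [← Finset.mul_sum _ _ ((N : ℂ)⁻¹)]
  simp only [Finset.mul_sum]
  refine Finset.sum_congr rfl fun b _ => Finset.sum_congr rfl fun b' _ => ?_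
  have := twirl_trace hN U hU (E * Matrix.vecMulVec (ψ b) (star (ψ b')) * Eᴴ) (E * Eᴴ) (hc _ _)
    (W b')ᴴ (W b) (by rw [Matrix.trace_conjTranspose, hW, star_zero])
  rw [hA, hB, hAB] at this
  simp only [Finset.mul_sum] at this
  rw [this]
  ring

/-! ### Norm estimates for the attack -/

omit [DecidableEq ι] in
theorem sum_trace_eq {α β : Type*} [Fintype α] [Fintype β] (W : β → Matrix ι ι ℂ)
    (ψ : β → α → ℂ) :
    ∑ b, ∑ b', (star (ψ b') ⬝ᵥ ψ b) * ((W b')ᴴ * W b).trace =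
      ((∑ a, ∑ x, ∑ y, ‖∑ b, ψ b a * W b x y‖ ^ 2 : ℝ) : ℂ) := by
  push_cast
  simp only [← Complex.conj_mul', map_sum, map_mul, Finset.sum_mul_sum, dotProduct, Matrix.trace,
    Matrix.diag_apply, Matrix.mul_apply, Matrix.conjTranspose_apply, Pi.star_apply]
  have hswap : ∀ f : β → β → α → ι → ι → ℂ, ∑ b, ∑ b', ∑ a, ∑ y, ∑ x, f b b' a x y =
      ∑ a, ∑ x, ∑ y, ∑ b', ∑ b, f b b' a x y := fun f => calc
    _ = ∑ b, ∑ a, ∑ b', ∑ y, ∑ x, f b b' a x y := Finset.sum_congr rfl fun b _ => Finset.sum_comm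
    _ = ∑ a, ∑ b, ∑ b', ∑ y, ∑ x, f b b' a x y := Finset.sum_comm
    _ = _ := Finset.sum_congr rfl fun a _ => calc
      _ = ∑ b, ∑ b', ∑ x, ∑ y, f b b' a x y :=
        Finset.sum_congr rfl fun b _ => Finset.sum_congr rfl fun b' _ => Finset.sum_comm
      _ = ∑ b, ∑ x, ∑ b', ∑ y, f b b' a x y := Finset.sum_congr rfl fun b _ => Finset.sum_comm
      _ = ∑ x, ∑ b, ∑ b', ∑ y, f b b' a x y := Finset.sum_comm
      _ = ∑ x, ∑ b, ∑ y, ∑ b', f b b' a x y :=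
        Finset.sum_congr rfl fun x _ => Finset.sum_congr rfl fun b _ => Finset.sum_comm
      _ = ∑ x, ∑ y, ∑ b, ∑ b', f b b' a x y := Finset.sum_congr rfl fun x _ => Finset.sum_comm
      _ = _ := Finset.sum_congr rfl fun x _ => Finset.sum_congr rfl fun y _ => Finset.sum_comm
  simp only [Finset.mul_sum]
  rw [hswap]
  refine Finset.sum_congr rfl fun a _ => Finset.sum_congr rfl fun x _ =>
    Finset.sum_congr rfl fun y _ => Finset.sum_congr rfl fun b' _ =>
    Finset.sum_congr rfl fun b _ => ?_
  simp only [starRingEnd_apply]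
  ring

/-- Removing the scalar part `m • 1` of a matrix, where `m` is its normalized trace, is an orthogonal
projection for the Hilbert–Schmidt inner product. -/
theorem centered_le (v : ι → ι → ℂ) (m : ℂ) (hm : (Fintype.card ι : ℂ) * m = ∑ x, v x x) :
    ∑ x, ∑ y, ‖v x y - if x = y then m else 0‖ ^ 2 ≤ ∑ x, ∑ y, ‖v x y‖ ^ 2 := by
  have key : ((∑ x, ∑ y, ‖v x y - if x = y then m else 0‖ ^ 2 : ℝ) : ℂ) =
      ((∑ x, ∑ y, ‖v x y‖ ^ 2 - Fintype.card ι * ‖m‖ ^ 2 : ℝ) : ℂ) := by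
    have e : ∀ x y, (starRingEnd ℂ) (v x y - if x = y then m else 0) *
        (v x y - if x = y then m else 0) = (starRingEnd ℂ) (v x y) * v x y -
        (if x = y then (starRingEnd ℂ) m * v x y + m * (starRingEnd ℂ) (v x y)
          - (starRingEnd ℂ) m * m else 0) := by
      intro x y
      split_ifs
      · rw [map_sub]; ring
      · simp
    push_cast
    simp only [← Complex.conj_mul', e, Finset.sum_sub_distrib, Finset.sum_ite_eq,
      Finset.mem_univ, if_true, Finset.sum_add_distrib, ← Finset.mul_sum, ← map_sum, ← hm]
    simp
    ring
  have := Complex.ofReal_injective key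
  rw [this]
  have : 0 ≤ (Fintype.card ι : ℝ) * ‖m‖ ^ 2 := by positivity
  linarith

theorem isometry_norm {m n : Type*} [Fintype m] [Fintype n] [DecidableEq n] (V : Matrix m n ℂ)
    (hV : Vᴴ * V = 1) (u : n → ℂ) : ∑ i, ‖(V *ᵥ u) i‖ ^ 2 = ∑ j, ‖u j‖ ^ 2 := by
  have h : star (V *ᵥ u) ⬝ᵥ (V *ᵥ u) = star u ⬝ᵥ u := by
    rw [Matrix.star_mulVec, ← Matrix.dotProduct_mulVec, Matrix.mulVec_mulVec, hV, Matrix.one_mulVec]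
  apply Complex.ofReal_injective
  push_cast
  simpa only [← Complex.conj_mul', dotProduct, Pi.star_apply, starRingEnd_apply] using h

/-- The traceless part of an isometry `V` is controlled by `V` itself, and
`∑ y, ‖V (e_y ⊗ u)‖² = d ‖u‖²`. -/
theorem attack_bound {β γ : Type*} [Fintype β] [DecidableEq β] [Fintype γ]
    (V : Matrix (ι × γ) (ι × β) ℂ) (hV : Vᴴ * V = 1) (Γ : Matrix γ β ℂ)
    (hΓ : ∀ c b, (Fintype.card ι : ℂ) * Γ c b = ∑ i, V (i, c) (i, b)) (u : β → ℂ) :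
    ∑ c, ∑ x, ∑ y, ‖∑ b, u b * (V (x, c) (y, b) - if x = y then Γ c b else 0)‖ ^ 2 ≤
      Fintype.card ι * ∑ b, ‖u b‖ ^ 2 := by
  calc _ ≤ ∑ c, ∑ x, ∑ y, ‖∑ b, u b * V (x, c) (y, b)‖ ^ 2 := by
        refine Finset.sum_le_sum fun c _ => ?_
        refine le_trans (le_of_eq ?_) (centered_le _ (∑ b, u b * Γ c b) ?_)
        · refine Finset.sum_congr rfl fun x _ => Finset.sum_congr rfl fun y _ => ?_
          simp only [mul_sub, Finset.sum_sub_distrib]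
          split_ifs <;> simp
        · rw [Finset.mul_sum, Finset.sum_comm]
          refine Finset.sum_congr rfl fun b _ => ?_
          rw [← Finset.mul_sum, ← hΓ]; ring
    _ = ∑ y, ∑ p, ‖(V *ᵥ fun q => if y = q.1 then u q.2 else 0) p‖ ^ 2 := by
        simp only [Matrix.mulVec, dotProduct, Fintype.sum_prod_type, mul_ite, mul_zero,
          Finset.sum_ite_irrel, Finset.sum_const_zero, Finset.sum_ite_eq, Finset.mem_univ, if_true]
        rw [Finset.sum_comm, Finset.sum_comm (γ := ι) (α := ι)]
        simp only [mul_comm]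
        exact Finset.sum_congr rfl fun x _ => Finset.sum_comm
    _ = _ := by
        simp only [isometry_norm V hV, Fintype.sum_prod_type]
        have : ∀ y : ι, ∑ x, ∑ b, ‖if y = x then u b else 0‖ ^ 2 = ∑ b, ‖u b‖ ^ 2 := by
          intro y
          rw [Finset.sum_eq_single y] <;> simp +contextual [eq_comm]
        simp [this]

end

/-! ### The authentication bound -/

/-- **Two-designs give total authentication (key bound)**: if `{U_k}` is an exact
unitary 2-design on `ℂ^{d_C} = ℂ^{d_A} ⊗ ℂ^{d_T}` (with respect to the Haar
probability measure `μ` on `U(d_C)`, here any left-invariant Borel probability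
measure, necessarily Haar), `V` is an isometric attack from `ℂ^{d_C} ⊗ ℂ^{d_B}`
to `ℂ^{d_C} ⊗ ℂ^{d_{B'}}`, `Γ_V = (1/d_C)·Tr_C[V]` the ideal channel and `Φ_k`
the real (accept) channel for key `k`, then for every unit vector `ψ`:
`(1/|K|) ∑_k ‖((I ⊗ Γ_V) − Φ_k) ψ‖₂² ≤ 1/d_T`. -/
theorem two_design_total_auth_bound (dA dT dB dB' N : ℕ)
    (hA : 0 < dA) (hT : 0 < dT) (hB : 0 < dB) (hB' : 0 < dB') (hN : 0 < N)
    (U : Fin N → Matrix (Fin dA × Fin dT) (Fin dA × Fin dT) ℂ)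
    (hU : ∀ k, U k ∈ Matrix.unitaryGroup (Fin dA × Fin dT) ℂ)
    (μ : Measure (Matrix.unitaryGroup (Fin dA × Fin dT) ℂ))
    [IsProbabilityMeasure μ]
    (hinv : ∀ V : Matrix.unitaryGroup (Fin dA × Fin dT) ℂ,
      μ.map (fun W => V * W) = μ)
    (hdesign : ∀ (X : Matrix ((Fin dA × Fin dT) × (Fin dA × Fin dT))
        ((Fin dA × Fin dT) × (Fin dA × Fin dT)) ℂ)
        (p q : (Fin dA × Fin dT) × (Fin dA × Fin dT)),
      (N : ℂ)⁻¹ * (∑ k, ((U k ⊗ₖ U k) * X * (U k ⊗ₖ U k)ᴴ) p q)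
        = ∫ W : Matrix.unitaryGroup (Fin dA × Fin dT) ℂ,
            ((((W : Matrix (Fin dA × Fin dT) (Fin dA × Fin dT) ℂ) ⊗ₖ
                (W : Matrix (Fin dA × Fin dT) (Fin dA × Fin dT) ℂ)) * X *
              (((W : Matrix (Fin dA × Fin dT) (Fin dA × Fin dT) ℂ) ⊗ₖ
                (W : Matrix (Fin dA × Fin dT) (Fin dA × Fin dT) ℂ))ᴴ)) p q) ∂μ)
    (V : Matrix ((Fin dA × Fin dT) × Fin dB') ((Fin dA × Fin dT) × Fin dB) ℂ)
    (hV : Vᴴ * V = 1)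
    (Γ : Matrix (Fin dB') (Fin dB) ℂ)
    (hΓ : Γ = ((dA * dT : ℕ) : ℂ)⁻¹ •
      Matrix.of fun b' b => ∑ i : Fin dA × Fin dT, V (i, b') (i, b))
    (Φ : Fin N → Matrix (Fin dA × Fin dB') (Fin dA × Fin dB) ℂ)
    (hΦ : ∀ k, Φ k = Matrix.of fun p q =>
      (((U k)ᴴ ⊗ₖ (1 : Matrix (Fin dB') (Fin dB') ℂ)) * V *
          (U k ⊗ₖ (1 : Matrix (Fin dB) (Fin dB) ℂ)))
        ((p.1, (⟨0, hT⟩ : Fin dT)), p.2) ((q.1, (⟨0, hT⟩ : Fin dT)), q.2))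
    (ψ : Fin dA × Fin dB → ℂ) (hψ : ∑ p, ‖ψ p‖ ^ 2 = 1) :
    (N : ℝ)⁻¹ * ∑ k, ∑ p,
        ‖((((1 : Matrix (Fin dA) (Fin dA) ℂ) ⊗ₖ Γ) - Φ k) *ᵥ ψ) p‖ ^ 2
      ≤ (dT : ℝ)⁻¹ := by
  have hdA : (dA : ℂ) ≠ 0 := by exact_mod_cast hA.ne'
  have hdT : (dT : ℂ) ≠ 0 := by exact_mod_cast hT.ne'
  have hcard : Fintype.card (Fin dA × Fin dT) = dA * dT := by simp
  have hU' : ∀ k, (U k)ᴴ * U k = 1 := fun k => Matrix.mem_unitaryGroup_iff'.1 (hU k)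
  have hΓ' : ∀ c b, (Fintype.card (Fin dA × Fin dT) : ℂ) * Γ c b =
      ∑ i : Fin dA × Fin dT, V (i, c) (i, b) := by
    intro c b
    rw [hΓ, hcard, Matrix.smul_apply, Matrix.of_apply, smul_eq_mul, mul_inv_cancel_left₀]
    push_cast
    exact mul_ne_zero hdA hdT
  -- the traceless parts, on the cipher register, of the blocks `⟨c| V |b⟩` of the attack
  obtain ⟨W, hW⟩ : ∃ W : Fin dB' → Fin dB → Matrix (Fin dA × Fin dT) (Fin dA × Fin dT) ℂ,
      ∀ c b, W c b = Matrix.of (fun x y => V (x, c) (y, b)) - Γ c b • 1 := ⟨_, fun _ _ => rfl⟩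
  have hWtr : ∀ c b, (W c b).trace = 0 := by
    intro c b
    rw [hW, Matrix.trace_sub, Matrix.trace_smul, Matrix.trace_one, smul_eq_mul, mul_comm, hΓ']
    simp [Matrix.trace]
  -- the isometry `|a⟩ ↦ |a⟩ ⊗ |0⟩`
  obtain ⟨E, hE⟩ : ∃ E : Matrix (Fin dA × Fin dT) (Fin dA) ℂ,
      E = Matrix.of fun x a => if x = (a, ⟨0, hT⟩) then 1 else 0 := ⟨_, rfl⟩
  have hEE : Eᴴ * E = 1 := by
    ext a a'
    rw [hE]
    simp [Matrix.mul_apply, Matrix.one_apply, eq_comm]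
  have hEX : ∀ (X : Matrix (Fin dA × Fin dT) (Fin dA × Fin dT) ℂ) a a',
      (Eᴴ * X * E) a a' = X (a, ⟨0, hT⟩) (a', ⟨0, hT⟩) := by
    intro X a a'
    rw [hE]
    simp [Matrix.mul_apply]
  have hentry : ∀ k a c a' b, (((1 : Matrix (Fin dA) (Fin dA) ℂ) ⊗ₖ Γ) - Φ k) (a, c) (a', b) =
      - (Eᴴ * (U k)ᴴ * W c b * U k * E) a a' := by
    intro k a c a' b
    have e : Eᴴ * (U k)ᴴ * W c b * U k * E =
        Eᴴ * ((U k)ᴴ * Matrix.of (fun x y => V (x, c) (y, b)) * U k) * E - Γ c b • 1 := by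
      rw [hW, Matrix.mul_sub, Matrix.sub_mul, Matrix.sub_mul, Matrix.mul_smul, Matrix.mul_one,
        Matrix.smul_mul, Matrix.smul_mul, Matrix.mul_assoc Eᴴ (U k)ᴴ (U k), hU', Matrix.mul_one,
        hEE]
      simp only [Matrix.mul_assoc]
    rw [e, Matrix.sub_apply, Matrix.sub_apply, hEX, hΦ, Matrix.kroneckerMap_apply]
    have e2 : (((U k)ᴴ ⊗ₖ (1 : Matrix (Fin dB') (Fin dB') ℂ)) * V *
          (U k ⊗ₖ (1 : Matrix (Fin dB) (Fin dB) ℂ)))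
        ((a, (⟨0, hT⟩ : Fin dT)), c) ((a', (⟨0, hT⟩ : Fin dT)), b) =
        ((U k)ᴴ * Matrix.of (fun x y => V (x, c) (y, b)) * U k) (a, ⟨0, hT⟩) (a', ⟨0, hT⟩) := by
      simp only [Matrix.mul_apply, Fintype.sum_prod_type (α₁ := Fin dA × Fin dT),
        Matrix.kroneckerMap_apply,
        Matrix.one_apply, mul_ite, ite_mul, mul_one, mul_zero, zero_mul, Finset.sum_ite_eq,
        Finset.sum_ite_eq', Finset.mem_univ, if_true, Matrix.of_apply]
    simp only [Matrix.of_apply, e2, Matrix.smul_apply, smul_eq_mul]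
    ring
  have hc : ∀ A B : Matrix (Fin dA × Fin dT) (Fin dA × Fin dT) ℂ,
      ∀ V ∈ Matrix.unitaryGroup (Fin dA × Fin dT) ℂ,
      Commute (Matrix.of fun p q => (N : ℂ)⁻¹ *
        ∑ k, ((U k ⊗ₖ U k) * (A ⊗ₖ B) * (U k ⊗ₖ U k)ᴴ) p q) (V ⊗ₖ V) := fun A B V hV =>
    commute_twirl μ hinv (A ⊗ₖ B) _ (fun p q => hdesign _ p q) V hV
  obtain ⟨r, hr⟩ : ∃ r : Fin dB' → Fin N → Fin dA → ℂ, ∀ c k, r c k =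
    ∑ b, (Eᴴ * (U k)ᴴ * W c b * U k * E) *ᵥ (fun a => ψ (a, b)) := ⟨_, fun _ _ => rfl⟩
  have hnorm : ∀ k a c, ‖((((1 : Matrix (Fin dA) (Fin dA) ℂ) ⊗ₖ Γ) - Φ k) *ᵥ ψ) (a, c)‖ =
      ‖r c k a‖ := by
    intro k a c
    rw [← norm_neg]
    congr 1
    rw [hr, Finset.sum_apply]
    simp only [Matrix.mulVec, dotProduct, Fintype.sum_prod_type, hentry, neg_mul,
      Finset.sum_neg_distrib, neg_neg]
    rw [Finset.sum_comm]
  simp only [Fintype.sum_prod_type, hnorm]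
  -- the exact value of the average, for each outcome `c` of the output register
  have hval : ∀ c, (((dA * dT : ℕ) : ℝ) * (((dA * dT : ℕ) : ℝ) ^ 2 - 1)) *
      ((N : ℝ)⁻¹ * ∑ k, ∑ a, ‖r c k a‖ ^ 2) = (((dA * dT : ℕ) : ℝ) * dA - 1) *
      ∑ a, ∑ x, ∑ y, ‖∑ b, ψ (a, b) * W c b x y‖ ^ 2 := by
    intro c
    have h := twirl_normSq hN U hU' hc E hEE (W c) (hWtr c) (fun b a => ψ (a, b))
    rw [sum_trace_eq, hcard, Fintype.card_fin] at h
    simp only [← hr] at h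
    apply Complex.ofReal_injective
    rw [Complex.ofReal_mul _ (∑ a, _)]
    push_cast at h ⊢
    rw [← h]
    simp only [← Complex.conj_mul', dotProduct, Pi.star_apply, starRingEnd_apply]
  have hbound : ∑ c, ∑ a, ∑ x, ∑ y, ‖∑ b, ψ (a, b) * W c b x y‖ ^ 2 ≤ ((dA * dT : ℕ) : ℝ) := by
    rw [Finset.sum_comm]
    have : ∀ a, ∑ c, ∑ x, ∑ y, ‖∑ b, ψ (a, b) * W c b x y‖ ^ 2 ≤
        ((dA * dT : ℕ) : ℝ) * ∑ b, ‖ψ (a, b)‖ ^ 2 := by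
      intro a
      have h := attack_bound V hV Γ hΓ' fun b => ψ (a, b)
      rw [hcard] at h
      refine le_trans (le_of_eq ?_) h
      simp [hW, Matrix.one_apply]
    refine (Finset.sum_le_sum fun a _ => this a).trans ?_
    rw [← Finset.mul_sum, ← Fintype.sum_prod_type', hψ, mul_one]
  have htot : (N : ℝ)⁻¹ * ∑ k, ∑ a, ∑ c, ‖r c k a‖ ^ 2 =
      ∑ c, (N : ℝ)⁻¹ * ∑ k, ∑ a, ‖r c k a‖ ^ 2 := by
    rw [← Finset.mul_sum]
    congr 1
    exact (Finset.sum_congr rfl fun k _ => Finset.sum_comm).trans Finset.sum_comm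
  rw [htot]
  have hsum := Finset.sum_congr (rfl : (Finset.univ : Finset (Fin dB')) = Finset.univ)
    fun c _ => hval c
  rw [← Finset.mul_sum _ _ (((dA * dT : ℕ) : ℝ) * (((dA * dT : ℕ) : ℝ) ^ 2 - 1)),
    ← Finset.mul_sum _ _ (((dA * dT : ℕ) : ℝ) * dA - 1)] at hsum
  have hA1 : (1 : ℝ) ≤ dA := by exact_mod_cast hA
  have hT1 : (1 : ℝ) ≤ dT := by exact_mod_cast hT
  rcases Nat.eq_or_lt_of_le (Nat.mul_pos hA hT : 1 ≤ dA * dT) with h1 | h1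
  · -- in dimension one a traceless matrix vanishes
    have hsub : Subsingleton (Fin dA × Fin dT) := Fintype.card_le_one_iff_subsingleton.1 (by omega)
    have hW0 : ∀ c b, W c b = 0 := by
      intro c b
      ext x y
      have := hWtr c b
      rw [Matrix.trace, Fintype.sum_subsingleton _ x] at this
      rw [Subsingleton.elim y x]
      exact this
    have hr0 : ∀ c k a, r c k a = 0 := by simp [hr, hW0]
    simp [hr0]
  · have hd2 : (2 : ℝ) ≤ ((dA * dT : ℕ) : ℝ) := by exact_mod_cast h1
    have hdd : (((dA * dT : ℕ) : ℝ)) = dA * dT := by push_cast; ring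
    generalize (((dA * dT : ℕ) : ℝ)) = d at *
    generalize ∑ c, (N : ℝ)⁻¹ * ∑ k, ∑ a, ‖r c k a‖ ^ 2 = S at *
    generalize ∑ c, ∑ a, ∑ x, ∑ y, ‖∑ b, ψ (a, b) * W c b x y‖ ^ 2 = R at *
    have hpos : 0 < d * (d ^ 2 - 1) := by nlinarith
    have hle : d * (d ^ 2 - 1) * S ≤ (d * dA - 1) * d := by
      rw [hsum]
      exact mul_le_mul_of_nonneg_left hbound (by nlinarith)
    have hT0 : (0 : ℝ) < dT := by linarith
    rw [← one_div, le_div_iff₀ hT0]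
    -- with `d = dA * dT` this amounts to `dT ≥ 1`
    have hle2 : (d * dA - 1) * d * dT ≤ d * (d ^ 2 - 1) := by
      have : (d * dA - 1) * d * dT = d * (d * d - dT) := by rw [hdd]; ring
      rw [this]
      nlinarith
    have := mul_le_mul_of_nonneg_right hle hT0.le
    refine le_of_mul_le_mul_left ?_ hpos
    linarith
end
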